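/- arXiv:2301.02135 — 8 statements merged into one kernel-verified Lean document; each statement's English description precedes it below -/
import Mathlib

section
/- Let G be a subgroup of SL(2,ℤ) and let f : ℍ → ℂ be a holomorphic function satisfying the weight-2 transformation law f(γ·τ) = (cτ+d)² f(τ) for every γ = [[a,b],[c,d]] ∈ G and every τ ∈ ℍ. For γ ∈ G and τ₀ ∈ ℍ define the period P(γ, τ₀) := ∫₀¹ f(τ₀ + t(γ·τ₀ − τ₀))·(γ·τ₀ − τ₀) dt (the integral of f(τ)dτ along the straight segment from τ₀ to γ·τ₀, which lies in ℍ by convexity). Then P(γ, τ₀) is independent of the base point: P(γ, τ₀) = P(γ, τ₁) for all τ₀, τ₁ ∈ ℍ. -/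
/-- Fundamental theorem of calculus along a segment in the upper half plane. -/
lemma segment_integral_eq (f F : ℂ → ℂ)
    (hf : DifferentiableOn ℂ f {z : ℂ | 0 < z.im})
    (hF : ∀ z ∈ {z : ℂ | 0 < z.im}, HasDerivAt F (f z) z)
    (a b : ℂ) (ha : 0 < a.im) (hb : 0 < b.im) :
    (∫ t in (0:ℝ)..1, f (a + (t : ℂ) * (b - a)) * (b - a)) = F b - F a := by
  have hmem : ∀ t ∈ Set.uIcc (0:ℝ) 1, a + (t : ℂ) * (b - a) ∈ {z : ℂ | 0 < z.im} := by
    intro t ht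
    rw [Set.uIcc_of_le zero_le_one] at ht
    have := (convex_halfSpace_im_gt 0).add_smul_sub_mem (x := a) (y := b) ha hb ht
    simpa using this
  have hl : ∀ t : ℝ, HasDerivAt (fun t : ℝ => a + (t : ℂ) * (b - a)) (b - a) t := by
    intro t
    simpa using ((Complex.ofRealCLM.hasDerivAt (x := t)).mul_const (b - a)).const_add a
  have := intervalIntegral.integral_eq_sub_of_hasDerivAt
    (f := fun t : ℝ => F (a + (t : ℂ) * (b - a)))
    (f' := fun t : ℝ => f (a + (t : ℂ) * (b - a)) * (b - a)) (a := 0) (b := 1)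
    (fun t ht => (hF _ (hmem t ht)).comp t (hl t)) ?_
  · simpa using this
  · apply ContinuousOn.intervalIntegrable
    refine ContinuousOn.mul ?_ continuousOn_const
    exact hf.continuousOn.comp (by fun_prop) hmem


/-- For a subgroup `G ≤ SL(2,ℤ)` and a holomorphic function `f` on the upper
half plane satisfying the weight-2 transformation law, the period
`P(γ, τ₀) = ∫₀¹ f(τ₀ + t(γ·τ₀ − τ₀))·(γ·τ₀ − τ₀) dt` is independent of the base point. -/
theorem period_base_point_independent
    (G : Subgroup (Matrix.SpecialLinearGroup (Fin 2) ℤ))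
    (f : ℂ → ℂ)
    (hf : DifferentiableOn ℂ f {z : ℂ | 0 < z.im})
    (hmod : ∀ γ ∈ G, ∀ τ : UpperHalfPlane,
      f ((γ • τ : UpperHalfPlane) : ℂ) =
        (((γ : Matrix (Fin 2) (Fin 2) ℤ) 1 0 : ℂ) * (τ : ℂ) +
          ((γ : Matrix (Fin 2) (Fin 2) ℤ) 1 1 : ℂ)) ^ 2 * f (τ : ℂ))
    (γ : Matrix.SpecialLinearGroup (Fin 2) ℤ) (hγ : γ ∈ G)
    (τ₀ τ₁ : UpperHalfPlane) :
    (∫ t in (0:ℝ)..1,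
        f ((τ₀ : ℂ) + (t : ℂ) * (((γ • τ₀ : UpperHalfPlane) : ℂ) - (τ₀ : ℂ))) *
          (((γ • τ₀ : UpperHalfPlane) : ℂ) - (τ₀ : ℂ))) =
    (∫ t in (0:ℝ)..1,
        f ((τ₁ : ℂ) + (t : ℂ) * (((γ • τ₁ : UpperHalfPlane) : ℂ) - (τ₁ : ℂ))) *
          (((γ • τ₁ : UpperHalfPlane) : ℂ) - (τ₁ : ℂ))) := by

  have hopen : IsOpen {z : ℂ | 0 < z.im} := isOpen_lt continuous_const Complex.continuous_im
  have hconv : Convex ℝ {z : ℂ | 0 < z.im} := convex_halfSpace_im_gt 0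
  obtain ⟨F, hF'⟩ := hconv.exists_forall_hasDerivWithinAt hf
  have hF : ∀ z ∈ {z : ℂ | 0 < z.im}, HasDerivAt F (f z) z :=
    fun z hz => (hF' z hz).hasDerivAt (hopen.mem_nhds hz)
  rw [segment_integral_eq f F hf hF _ _ τ₀.im_pos (γ • τ₀).im_pos,
    segment_integral_eq f F hf hF _ _ τ₁.im_pos (γ • τ₁).im_pos]
  set a : ℂ := ((γ : Matrix (Fin 2) (Fin 2) ℤ) 0 0 : ℂ) with ha
  set b : ℂ := ((γ : Matrix (Fin 2) (Fin 2) ℤ) 0 1 : ℂ) with hb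
  set c : ℂ := ((γ : Matrix (Fin 2) (Fin 2) ℤ) 1 0 : ℂ) with hc
  set d : ℂ := ((γ : Matrix (Fin 2) (Fin 2) ℤ) 1 1 : ℂ) with hd
  have hdet : a * d - b * c = 1 := by
    have h := γ.det_coe
    rw [Matrix.det_fin_two] at h
    rw [ha, hb, hc, hd]
    exact_mod_cast h
  have hsmul : ∀ τ : UpperHalfPlane,
      ((γ • τ : UpperHalfPlane) : ℂ) = (a * τ + b) / (c * τ + d) := by
    intro τ
    rw [UpperHalfPlane.specialLinearGroup_apply]
    simp [ha, hb, hc, hd]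
  have hne : ∀ τ : UpperHalfPlane, c * (τ : ℂ) + d ≠ 0 := by
    intro τ
    have := UpperHalfPlane.denom_ne_zero (γ : Matrix.GeneralLinearGroup (Fin 2) ℝ) τ
    simpa [UpperHalfPlane.denom, hc, hd] using this
  have hder : ∀ z ∈ {z : ℂ | 0 < z.im},
      HasDerivAt (fun z => F ((a * z + b) / (c * z + d)) - F z) 0 z := by
    intro z hz
    let τ : UpperHalfPlane := ⟨z, hz⟩
    have hn : c * z + d ≠ 0 := hne τ
    have hs : ((γ • τ : UpperHalfPlane) : ℂ) = (a * z + b) / (c * z + d) := hsmul τ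
    have h1 : HasDerivAt (fun z : ℂ => (a * z + b) / (c * z + d)) (1 / (c * z + d) ^ 2) z := by
      have hnum : HasDerivAt (fun z : ℂ => a * z + b) a z := by
        simpa using ((hasDerivAt_id z).const_mul a).add_const b
      have hden : HasDerivAt (fun z : ℂ => c * z + d) c z := by
        simpa using ((hasDerivAt_id z).const_mul c).add_const d
      have he : (1 : ℂ) = a * (c * z + d) - (a * z + b) * c := by
        linear_combination -hdet
      rw [he]
      exact hnum.fun_div hden hn
    have h2 : HasDerivAt F (f ((a * z + b) / (c * z + d))) ((a * z + b) / (c * z + d)) := by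
      rw [← hs]
      exact hF _ (γ • τ).im_pos
    have h3 : f ((a * z + b) / (c * z + d)) = (c * z + d) ^ 2 * f z := by
      rw [← hs]
      exact hmod γ hγ τ
    have he : (0 : ℂ) = f ((a * z + b) / (c * z + d)) * (1 / (c * z + d) ^ 2) - f z := by
      rw [h3]
      field_simp
      ring
    rw [he]
    exact (h2.comp z h1).sub (hF z hz)
  have key := hconv.is_const_of_fderivWithin_eq_zero (𝕜 := ℂ)
    (f := fun z => F ((a * z + b) / (c * z + d)) - F z)
    (fun z hz => (hder z hz).differentiableAt.differentiableWithinAt)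
    (fun z hz => by
      rw [fderivWithin_of_isOpen hopen hz]
      ext
      simpa using (hder z hz).deriv)
    τ₀.im_pos τ₁.im_pos
  rw [hsmul, hsmul]
  exact key
end

section
/- Let G be a subgroup of SL(2,ℤ) and let f : ℍ → ℂ be a holomorphic function satisfying the weight-2 transformation law f(γ·τ) = (cτ+d)² f(τ) for every γ = [[a,b],[c,d]] ∈ G and every τ ∈ ℍ. Fix τ₀ ∈ ℍ and for γ ∈ G define P(γ) := ∫₀¹ f(τ₀ + t(γ·τ₀ − τ₀))·(γ·τ₀ − τ₀) dt. Then P is a group homomorphism from G to the additive group ℂ: P(γ₁γ₂) = P(γ₁) + P(γ₂) for all γ₁, γ₂ ∈ G. -/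
/-- For a subgroup `G ≤ SL(2,ℤ)` and a holomorphic function `f` on the upper
half plane satisfying the weight-2 transformation law, with a fixed base point `τ₀`, the
period map `P(γ) = ∫₀¹ f(τ₀ + t(γ·τ₀ − τ₀))·(γ·τ₀ − τ₀) dt` is a homomorphism from `G`
to the additive group `ℂ`. -/
theorem period_map_is_homomorphism
    (G : Subgroup (Matrix.SpecialLinearGroup (Fin 2) ℤ))
    (f : ℂ → ℂ)
    (hf : DifferentiableOn ℂ f {z : ℂ | 0 < z.im})
    (hmod : ∀ γ ∈ G, ∀ τ : UpperHalfPlane,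
      f ((γ • τ : UpperHalfPlane) : ℂ) =
        (((γ : Matrix (Fin 2) (Fin 2) ℤ) 1 0 : ℂ) * (τ : ℂ) +
          ((γ : Matrix (Fin 2) (Fin 2) ℤ) 1 1 : ℂ)) ^ 2 * f (τ : ℂ))
    (τ₀ : UpperHalfPlane)
    (P : Matrix.SpecialLinearGroup (Fin 2) ℤ → ℂ)
    (hP : ∀ γ : Matrix.SpecialLinearGroup (Fin 2) ℤ,
      P γ = ∫ t in (0:ℝ)..1,
        f ((τ₀ : ℂ) + (t : ℂ) * (((γ • τ₀ : UpperHalfPlane) : ℂ) - (τ₀ : ℂ))) *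
          (((γ • τ₀ : UpperHalfPlane) : ℂ) - (τ₀ : ℂ)))
    (γ₁ γ₂ : Matrix.SpecialLinearGroup (Fin 2) ℤ) (hγ₁ : γ₁ ∈ G) (hγ₂ : γ₂ ∈ G) :
    P (γ₁ * γ₂) = P γ₁ + P γ₂ := by
  set U : Set ℂ := {z : ℂ | 0 < z.im} with hU
  have hUo : IsOpen U := isOpen_lt continuous_const Complex.continuous_im
  have hUc : Convex ℝ U := convex_halfSpace_im_gt 0
  have hτU : ∀ τ : UpperHalfPlane, (τ : ℂ) ∈ U := fun τ => τ.im_pos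
  obtain ⟨F, hF0⟩ := hUc.exists_forall_hasDerivWithinAt hf
  have hF : ∀ z ∈ U, HasDerivAt F (f z) z :=
    fun z hz => (hF0 z hz).hasDerivAt (hUo.mem_nhds hz)
  -- The period is a difference of values of the primitive.
  have key : ∀ γ : Matrix.SpecialLinearGroup (Fin 2) ℤ,
      P γ = F ((γ • τ₀ : UpperHalfPlane) : ℂ) - F (τ₀ : ℂ) := by
    intro γ
    rw [hP γ]
    set w : ℂ := ((γ • τ₀ : UpperHalfPlane) : ℂ) with hw
    have hmem : ∀ t ∈ Set.uIcc (0 : ℝ) 1, (τ₀ : ℂ) + (t : ℂ) * (w - (τ₀ : ℂ)) ∈ U := by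
      intro t ht
      rw [Set.uIcc_of_le zero_le_one] at ht
      have := hUc.add_smul_sub_mem (hτU τ₀) (hτU (γ • τ₀)) ht
      rwa [Complex.real_smul] at this
    have hline : ∀ t : ℝ, HasDerivAt (fun t : ℝ => (τ₀ : ℂ) + (t : ℂ) * (w - (τ₀ : ℂ)))
        (w - (τ₀ : ℂ)) t := by
      intro t
      simpa using ((Complex.ofRealCLM.hasDerivAt (x := t)).mul_const (w - (τ₀ : ℂ))).const_add
        (τ₀ : ℂ)
    have hint := intervalIntegral.integral_eq_sub_of_hasDerivAt
      (f := fun t : ℝ => F ((τ₀ : ℂ) + (t : ℂ) * (w - (τ₀ : ℂ))))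
      (f' := fun t : ℝ => f ((τ₀ : ℂ) + (t : ℂ) * (w - (τ₀ : ℂ))) * (w - (τ₀ : ℂ)))
      (a := 0) (b := 1)
      (fun t ht => (hF _ (hmem t ht)).comp t (hline t))
      (ContinuousOn.intervalIntegrable
        ((hf.continuousOn.comp (by fun_prop) hmem).mul continuousOn_const))
    rw [hint]
    simp
  -- `F ∘ γ₁ - F` is constant.
  set a : ℂ := (((γ₁ : Matrix (Fin 2) (Fin 2) ℤ) 0 0 : ℤ) : ℂ) with ha
  set b : ℂ := (((γ₁ : Matrix (Fin 2) (Fin 2) ℤ) 0 1 : ℤ) : ℂ) with hb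
  set c : ℂ := (((γ₁ : Matrix (Fin 2) (Fin 2) ℤ) 1 0 : ℤ) : ℂ) with hc
  set d : ℂ := (((γ₁ : Matrix (Fin 2) (Fin 2) ℤ) 1 1 : ℤ) : ℂ) with hd
  have hdet : a * d - b * c = 1 := by
    have h := γ₁.det_coe
    rw [Matrix.det_fin_two] at h
    rw [ha, hb, hc, hd]
    exact_mod_cast h
  have hact : ∀ τ : UpperHalfPlane,
      ((γ₁ • τ : UpperHalfPlane) : ℂ) = (a * τ + b) / (c * τ + d) := by
    intro τ
    rw [UpperHalfPlane.coe_specialLinearGroup_apply]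
    simp [ha, hb, hc, hd]
  have hden : ∀ z ∈ U, c * z + d ≠ 0 := by
    intro z hz h0
    have h1 := hact ⟨z, hz⟩
    have h2 := (γ₁ • (⟨z, hz⟩ : UpperHalfPlane)).im_pos
    rw [← UpperHalfPlane.coe_im, h1] at h2
    simp [h0] at h2
  have hD : ∀ z ∈ U, HasDerivAt (fun z => F ((a * z + b) / (c * z + d)) - F z) 0 z := by
    intro z hz
    have hne := hden z hz
    have h1 := hact ⟨z, hz⟩
    have h2 : (a * z + b) / (c * z + d) ∈ U := by
      have h3 := hτU (γ₁ • (⟨z, hz⟩ : UpperHalfPlane))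
      rwa [h1] at h3
    have h4 : f ((a * z + b) / (c * z + d)) = (c * z + d) ^ 2 * f z := by
      have h5 := hmod γ₁ hγ₁ ⟨z, hz⟩
      rwa [h1] at h5
    have hn : HasDerivAt (fun z : ℂ => a * z + b) a z := by
      simpa using ((hasDerivAt_id z).const_mul a).add_const b
    have hdn : HasDerivAt (fun z : ℂ => c * z + d) c z := by
      simpa using ((hasDerivAt_id z).const_mul c).add_const d
    have h6 := ((hF _ h2).comp z (hn.div hdn hne)).sub (hF z hz)
    refine h6.congr_deriv ?_
    rw [h4]
    field_simp
    linear_combination f z * hdet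
  have hconst := hUo.is_const_of_deriv_eq_zero hUc.isPreconnected
    (fun z hz => (hD z hz).differentiableAt.differentiableWithinAt)
    (fun z hz => (hD z hz).deriv) (hτU (γ₂ • τ₀)) (hτU τ₀)
  simp only [← hact] at hconst
  rw [key, key, key, mul_smul]
  linear_combination hconst
end

section
/- Let h be a positive real number and let (aₙ)_{n≥1} be complex numbers with |aₙ| ≤ C·n^d for some constants C ≥ 0 and d ≥ 0, and define f : ℍ → ℂ by the (absolutely convergent) series f(τ) = ∑_{n≥1} aₙ · exp(2πi n τ / h). Then for every τ₀ ∈ ℍ the integral of 2πi·f along the vertical ray from τ₀ to i∞ satisfies ∫₀^∞ 2πi · f(τ₀ + i t) · i dt = −h · ∑_{n≥1} (aₙ/n) · exp(2πi n τ₀ / h), where both the integral and the series converge absolutely. -/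
open Real MeasureTheory

/-- For a cusp-form-type Fourier series `f(τ) = ∑_{n≥1} aₙ exp(2πi n τ / h)`
with polynomially bounded coefficients, the integral of `2πi·f` along the vertical ray
from `τ₀` to `i∞` equals `−h·∑_{n≥1} (aₙ/n) exp(2πi n τ₀ / h)`, with the integral and
the series converging absolutely. -/
theorem integral_along_vertical_ray
    (h : ℝ) (hh : 0 < h) (a : ℕ → ℂ) (C d : ℝ) (hC : 0 ≤ C) (hd : 0 ≤ d)
    (ha : ∀ n : ℕ, 1 ≤ n → ‖a n‖ ≤ C * (n : ℝ) ^ d)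
    (f : ℂ → ℂ)
    (hf : ∀ z : ℂ, 0 < z.im →
      f z = ∑' n : ℕ, a (n + 1) *
        Complex.exp (2 * (π : ℂ) * Complex.I * ((n : ℂ) + 1) * z / (h : ℂ)))
    (τ₀ : ℂ) (hτ₀ : 0 < τ₀.im) :
    IntegrableOn
      (fun t : ℝ => 2 * (π : ℂ) * Complex.I * f (τ₀ + (t : ℂ) * Complex.I) * Complex.I)
      (Set.Ioi (0 : ℝ)) ∧
    Summable (fun n : ℕ => a (n + 1) / ((n : ℂ) + 1) *
      Complex.exp (2 * (π : ℂ) * Complex.I * ((n : ℂ) + 1) * τ₀ / (h : ℂ))) ∧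
    (∫ t in Set.Ioi (0 : ℝ),
        2 * (π : ℂ) * Complex.I * f (τ₀ + (t : ℂ) * Complex.I) * Complex.I) =
      -(h : ℂ) * ∑' n : ℕ, a (n + 1) / ((n : ℂ) + 1) *
        Complex.exp (2 * (π : ℂ) * Complex.I * ((n : ℂ) + 1) * τ₀ / (h : ℂ)) := by
  set l : ℝ := 2 * π / h with hl
  have hlpos : 0 < l := by positivity
  have hhC : (h : ℂ) ≠ 0 := by exact_mod_cast hh.ne'
  have hpiC : (π : ℂ) ≠ 0 := by exact_mod_cast Real.pi_ne_zero
  have hlC : (l : ℂ) = 2 * (π : ℂ) / (h : ℂ) := by rw [hl]; push_cast; rfl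
  set c : ℕ → ℂ := fun n => a (n + 1) *
    Complex.exp (2 * (π : ℂ) * Complex.I * ((n : ℂ) + 1) * τ₀ / (h : ℂ)) with hc
  have hcs : Summable (fun n => ‖c n‖) := by
    set r : ℝ := Real.exp (-(l * τ₀.im)) with hr
    have hr1 : ‖r‖ < 1 := by
      rw [Real.norm_of_nonneg (Real.exp_pos _).le, Real.exp_lt_one_iff]
      have := mul_pos hlpos hτ₀
      linarith
    have h1 := summable_pow_mul_geometric_of_norm_lt_one ⌈d⌉₊ hr1
    have h2 := ((summable_nat_add_iff 1).2 h1).mul_left C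
    refine Summable.of_nonneg_of_le (fun n => norm_nonneg _) (fun n => ?_) h2
    have e : ‖Complex.exp (2 * (π : ℂ) * Complex.I * ((n : ℂ) + 1) * τ₀ / (h : ℂ))‖
        = r ^ (n + 1) := by
      rw [Complex.norm_exp, hr, ← Real.exp_nat_mul]
      congr 1
      have : 2 * (π : ℂ) * Complex.I * ((n : ℂ) + 1) * τ₀ / (h : ℂ)
          = ((l * (n + 1) : ℝ) : ℂ) * (Complex.I * τ₀) := by
        push_cast; rw [hlC]; ring
      rw [this, Complex.re_ofReal_mul]
      simp
      ring
    rw [hc]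
    simp only [norm_mul]
    rw [e, ← mul_assoc]
    have hr0 : 0 ≤ r := (Real.exp_pos _).le
    refine mul_le_mul_of_nonneg_right ?_ (pow_nonneg hr0 _)
    refine (ha (n + 1) (by omega)).trans (mul_le_mul_of_nonneg_left ?_ hC)
    rw [← Real.rpow_natCast]
    exact Real.rpow_le_rpow_of_exponent_le (by push_cast; linarith [n.cast_nonneg (α := ℝ)])
      (Nat.le_ceil d)
  set F : ℕ → ℝ → ℂ := fun n t => c n * Complex.exp ((-(l * (n + 1) : ℝ) : ℂ) * t) with hF
  have hfF : ∀ t : ℝ, 0 < t → f (τ₀ + (t : ℂ) * Complex.I) = ∑' n, F n t := by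
    intro t ht
    rw [hf _ (by simp; linarith)]
    refine tsum_congr fun n => ?_
    simp only [hF, hc]
    rw [mul_assoc (a (n + 1)), ← Complex.exp_add]
    congr 2
    push_cast
    rw [hlC]
    field_simp
    linear_combination (t : ℂ) * Complex.I_sq
  have hneg : ∀ n : ℕ, ((-(l * (n + 1) : ℝ) : ℂ)).re < 0 := by
    intro n
    rw [← Complex.ofReal_neg, Complex.ofReal_re]
    have : 0 < l * (n + 1) := by positivity
    linarith
  have hnF : ∀ n t, ‖F n t‖ = ‖c n‖ * Real.exp (-(l * (n + 1)) * t) := by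
    intro n t
    simp only [hF, norm_mul, Complex.norm_exp]
    congr 2
    rw [← Complex.ofReal_neg, ← Complex.ofReal_mul, Complex.ofReal_re]
  have hFint : ∀ n, IntegrableOn (F n) (Set.Ioi 0) := fun n =>
    (integrableOn_exp_mul_complex_Ioi (hneg n) 0).const_mul (c n)
  have hle : ∀ n (t : ℝ), 0 < t → ‖F n t‖ ≤ ‖c n‖ * Real.exp (-l * t) := by
    intro n t ht
    rw [hnF]
    refine mul_le_mul_of_nonneg_left (Real.exp_le_exp.2 ?_) (norm_nonneg _)
    have : 0 ≤ l * n * t := by positivity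
    nlinarith
  have hcont : ContinuousOn (fun t => ∑' n, F n t) (Set.Ioi 0) := by
    refine continuousOn_tsum (fun n => ?_) hcs (fun n t ht => ?_)
    · simp only [hF]; fun_prop
    · refine (hle n t ht).trans (mul_le_of_le_one_right (norm_nonneg _) ?_)
      rw [Real.exp_le_one_iff]
      have := mul_pos hlpos (show 0 < t from ht)
      linarith
  have hsumint : IntegrableOn (fun t => ∑' n, F n t) (Set.Ioi 0) := by
    have hg : IntegrableOn (fun t : ℝ => (∑' n, ‖c n‖) * Real.exp (-l * t)) (Set.Ioi 0) :=
      (integrableOn_exp_mul_Ioi (by linarith) 0).const_mul _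
    refine Integrable.mono' hg (hcont.aestronglyMeasurable measurableSet_Ioi) ?_
    filter_upwards [ae_restrict_mem measurableSet_Ioi] with t ht
    exact tsum_of_norm_bounded (hcs.hasSum.mul_right _) (fun n => hle n t ht)
  have hnsum : Summable (fun n => ∫ t in Set.Ioi (0 : ℝ), ‖F n t‖) := by
    refine Summable.of_nonneg_of_le (fun n => integral_nonneg fun t => norm_nonneg _)
      (fun n => ?_) (hcs.mul_right (∫ t in Set.Ioi (0 : ℝ), Real.exp (-l * t)))
    rw [← integral_const_mul]
    refine setIntegral_mono_on (hFint n).norm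
      ((integrableOn_exp_mul_Ioi (by linarith) 0).const_mul _) measurableSet_Ioi
      (fun t ht => hle n t ht)
  have hmain := hasSum_integral_of_summable_integral_norm hFint hnsum
  have hterm : ∀ n, ∫ t in Set.Ioi (0 : ℝ), F n t = c n / (n + 1) * (h / (2 * π)) := by
    intro n
    simp only [hF]
    rw [integral_const_mul, integral_exp_mul_complex_Ioi (hneg n)]
    have : (n : ℂ) + 1 ≠ 0 := by exact_mod_cast n.succ_ne_zero
    push_cast
    rw [hlC]
    simp
    field_simp
  have hct : ∀ n : ℕ, a (n + 1) / ((n : ℂ) + 1) *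
      Complex.exp (2 * (π : ℂ) * Complex.I * ((n : ℂ) + 1) * τ₀ / (h : ℂ))
      = c n / (n + 1) := by
    intro n
    simp only [hc]
    ring
  simp only [hct]
  refine ⟨?_, ?_, ?_⟩
  · refine ((hsumint.const_mul (2 * (π : ℂ) * Complex.I)).mul_const Complex.I).congr ?_
    filter_upwards [ae_restrict_mem measurableSet_Ioi] with t ht
    rw [hfF t ht]
  · refine Summable.of_norm_bounded hcs (fun n => ?_)
    rw [norm_div]
    refine div_le_self (norm_nonneg _) ?_
    rw [show (n : ℂ) + 1 = ((n + 1 : ℕ) : ℂ) by push_cast; rfl, Complex.norm_natCast]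
    push_cast
    linarith [n.cast_nonneg (α := ℝ)]
  · have e1 : (∫ t in Set.Ioi (0 : ℝ),
        2 * (π : ℂ) * Complex.I * f (τ₀ + (t : ℂ) * Complex.I) * Complex.I)
        = ∫ t in Set.Ioi (0 : ℝ), -(2 * (π : ℂ)) * ∑' n, F n t := by
      refine setIntegral_congr_fun measurableSet_Ioi (fun t ht => ?_)
      rw [hfF t ht]
      linear_combination (2 * (π : ℂ) * ∑' n, F n t) * Complex.I_sq
    rw [e1, integral_const_mul, ← hmain.tsum_eq]
    simp only [hterm]
    rw [tsum_mul_right]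
    field_simp
end

section
/- Let σ_S = (2 5)(3 7)(4 8)(6 9) and σ_R = (1 2 6)(3 8 5)(4 9 7) be permutations of {1,…,9}. Then the subgroup of S₉ generated by σ_S and σ_R has order 504. -/
namespace Mono

/-- A permutation of `Fin 9` from its table of values and that of its inverse. -/
def tab (f g : Fin 9 → Fin 9) (h₁ : ∀ x, g (f x) = x) (h₂ : ∀ x, f (g x) = x) :
    Equiv.Perm (Fin 9) := ⟨f, g, h₁, h₂⟩

/-- The generator `σ_S`. -/
def pS : Equiv.Perm (Fin 9) := tab ![6, 1, 5, 7, 8, 2, 0, 3, 4] ![6, 1, 5, 7, 8, 2, 0, 3, 4] (by decide) (by decide)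

/-- The generator `σ_R`. -/
def pR : Equiv.Perm (Fin 9) := tab ![7, 2, 6, 8, 0, 3, 1, 4, 5] ![4, 6, 1, 5, 7, 8, 2, 0, 3] (by decide) (by decide)

/-- An element of order 7 fixing `0` and `1`. -/
def c : Equiv.Perm (Fin 9) := tab ![0, 1, 4, 2, 5, 6, 8, 3, 7] ![0, 1, 3, 7, 2, 4, 5, 8, 6] (by decide) (by decide)

/-- The translations: elementary abelian of order 8, fixing `0`. -/
def v : Fin 8 → Equiv.Perm (Fin 9) := ![
  tab ![0, 1, 2, 3, 4, 5, 6, 7, 8] ![0, 1, 2, 3, 4, 5, 6, 7, 8] (by decide) (by decide),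
  tab ![0, 4, 6, 7, 1, 8, 2, 3, 5] ![0, 4, 6, 7, 1, 8, 2, 3, 5] (by decide) (by decide),
  tab ![0, 5, 3, 2, 8, 1, 7, 6, 4] ![0, 5, 3, 2, 8, 1, 7, 6, 4] (by decide) (by decide),
  tab ![0, 6, 4, 8, 2, 7, 1, 5, 3] ![0, 6, 4, 8, 2, 7, 1, 5, 3] (by decide) (by decide),
  tab ![0, 8, 7, 6, 5, 4, 3, 2, 1] ![0, 8, 7, 6, 5, 4, 3, 2, 1] (by decide) (by decide),
  tab ![0, 7, 8, 4, 3, 6, 5, 1, 2] ![0, 7, 8, 4, 3, 6, 5, 1, 2] (by decide) (by decide),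
  tab ![0, 3, 5, 1, 7, 2, 8, 4, 6] ![0, 3, 5, 1, 7, 2, 8, 4, 6] (by decide) (by decide),
  tab ![0, 2, 1, 5, 6, 3, 4, 8, 7] ![0, 2, 1, 5, 6, 3, 4, 8, 7] (by decide) (by decide)]

/-- Coset representatives: `u i` maps `0` to `i`. -/
def u : Fin 9 → Equiv.Perm (Fin 9) := ![
  tab ![0, 1, 2, 3, 4, 5, 6, 7, 8] ![0, 1, 2, 3, 4, 5, 6, 7, 8] (by decide) (by decide),
  tab ![1, 2, 3, 4, 5, 6, 7, 8, 0] ![8, 0, 1, 2, 3, 4, 5, 6, 7] (by decide) (by decide),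
  tab ![2, 6, 8, 0, 3, 1, 4, 5, 7] ![3, 5, 0, 4, 6, 7, 1, 8, 2] (by decide) (by decide),
  tab ![3, 5, 0, 4, 6, 7, 1, 8, 2] ![2, 6, 8, 0, 3, 1, 4, 5, 7] (by decide) (by decide),
  tab ![4, 6, 1, 5, 7, 8, 2, 0, 3] ![7, 2, 6, 8, 0, 3, 1, 4, 5] (by decide) (by decide),
  tab ![5, 0, 4, 6, 7, 1, 8, 2, 3] ![1, 5, 7, 8, 2, 0, 3, 4, 6] (by decide) (by decide),
  tab ![6, 1, 5, 7, 8, 2, 0, 3, 4] ![6, 1, 5, 7, 8, 2, 0, 3, 4] (by decide) (by decide),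
  tab ![7, 2, 6, 8, 0, 3, 1, 4, 5] ![4, 6, 1, 5, 7, 8, 2, 0, 3] (by decide) (by decide),
  tab ![8, 3, 7, 0, 1, 4, 2, 5, 6] ![3, 4, 6, 1, 5, 7, 8, 2, 0] (by decide) (by decide)]

/-- All elements of the group. -/
def f (p : Fin 9 × Fin 8 × Fin 7) : Equiv.Perm (Fin 9) := u p.1 * v p.2.1 * c ^ (p.2.2 : ℕ)

theorem c_pow : c ^ 7 = 1 := by decide

theorem c_v : ∀ j, ∃ j', c * v j = v j' * c := by decide

theorem v_v : ∀ j j', ∃ j'', v j * v j' = v j'' := by decide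

theorem cn_v (n : ℕ) : ∀ j, ∃ j', c ^ n * v j = v j' * c ^ n := by
  induction n with
  | zero => intro j; exact ⟨j, by simp⟩
  | succ n ih =>
    intro j
    obtain ⟨j₁, h₁⟩ := c_v j
    obtain ⟨j₂, h₂⟩ := ih j₁
    exact ⟨j₂, by rw [pow_succ, mul_assoc, h₁, ← mul_assoc, h₂, mul_assoc]⟩

theorem mem_range (i : Fin 9) (j : Fin 8) (n : ℕ) : u i * v j * c ^ n ∈ Set.range f := by
  refine ⟨(i, j, ⟨n % 7, Nat.mod_lt _ (by norm_num)⟩), ?_⟩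
  simp only [f]
  rw [← pow_eq_pow_mod n c_pow]

theorem pS_u : ∀ i, pS * u i = u (![6, 1, 5, 7, 8, 2, 0, 3, 4] i) * v (![0, 1, 0, 0, 6, 0, 0, 0, 1] i) *
    c ^ ((![0, 0, 0, 0, 5, 0, 0, 0, 2] : Fin 9 → ℕ) i) := by decide

theorem pR_u : ∀ i, pR * u i = u (![7, 2, 6, 8, 0, 3, 1, 4, 5] i) * v (![0, 0, 0, 0, 0, 2, 0, 0, 3] i) *
    c ^ ((![0, 0, 0, 0, 0, 6, 0, 0, 1] : Fin 9 → ℕ) i) := by decide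

theorem step (s : Equiv.Perm (Fin 9))
    (hs : ∀ i, ∃ (a : Fin 9) (b : Fin 8) (d : ℕ), s * u i = u a * v b * c ^ d)
    (g : Equiv.Perm (Fin 9)) (hg : g ∈ Set.range f) : s * g ∈ Set.range f := by
  obtain ⟨⟨i, j, k⟩, rfl⟩ := hg
  obtain ⟨a, b, d, h⟩ := hs i
  obtain ⟨j₁, h₁⟩ := cn_v d j
  obtain ⟨j₂, h₂⟩ := v_v b j₁
  have : s * f (i, j, k) = u a * v j₂ * c ^ (d + (k : ℕ)) := by
    calc s * f (i, j, k) = (s * u i) * v j * c ^ (k : ℕ) := by simp only [f, mul_assoc]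
      _ = u a * v b * (c ^ d * v j) * c ^ (k : ℕ) := by rw [h]; simp only [mul_assoc]
      _ = u a * (v b * v j₁) * (c ^ d * c ^ (k : ℕ)) := by rw [h₁]; simp only [mul_assoc]
      _ = _ := by rw [h₂, pow_add]
  rw [this]
  exact mem_range _ _ _

theorem stepS (g : Equiv.Perm (Fin 9)) (hg : g ∈ Set.range f) : pS * g ∈ Set.range f :=
  step pS (fun i => ⟨_, _, _, pS_u i⟩) g hg

theorem stepR (g : Equiv.Perm (Fin 9)) (hg : g ∈ Set.range f) : pR * g ∈ Set.range f :=
  step pR (fun i => ⟨_, _, _, pR_u i⟩) g hg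

theorem pS_inv : pS⁻¹ = pS := by decide

theorem pR_inv : pR⁻¹ = pR * pR := by decide

theorem le_range (g : Equiv.Perm (Fin 9)) (hg : g ∈ Subgroup.closure {pS, pR}) :
    g ∈ Set.range f := by
  induction hg using Subgroup.closure_induction_left with
  | one => exact ⟨(0, 0, 0), by decide⟩
  | mul_left x hx y _ ih =>
    rcases hx with rfl | rfl
    · exact stepS _ ih
    · exact stepR _ ih
  | inv_mul_cancel x hx y _ ih =>
    rcases hx with rfl | rfl
    · rw [pS_inv]; exact stepS _ ih
    · rw [pR_inv, mul_assoc]; exact stepR _ (stepR _ ih)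

theorem c_word : c = pR * pS * pR * pR * pS * pR * pS * pR * pS := by decide

theorem v_one : v 1 = pS * pR * pR * pS * pR * pS := by decide

theorem v_succ : ∀ j : Fin 7, j ≠ 0 → v j.succ = c * v j.castSucc * c⁻¹ := by decide

theorem u_word : ∀ i, u i = (![1, pR * pS, pR * pR * pS, pS * pR, pR * pR, pS * pR * pR * pS, pS, pR, pR * pS * pR] :
    Fin 9 → Equiv.Perm (Fin 9)) i := by decide

theorem f_mem (p : Fin 9 × Fin 8 × Fin 7) : f p ∈ Subgroup.closure {pS, pR} := by
  have hS : pS ∈ Subgroup.closure {pS, pR} := Subgroup.subset_closure (by simp)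
  have hR : pR ∈ Subgroup.closure {pS, pR} := Subgroup.subset_closure (by simp)
  generalize Subgroup.closure {pS, pR} = H at hS hR
  have hc : c ∈ H := by
    rw [c_word]
    repeat first | assumption | apply H.mul_mem
  have hv1 : v 1 ∈ H := by
    rw [v_one]
    repeat first | assumption | apply H.mul_mem
  have hv : ∀ j, v j ∈ H := by
    intro j
    induction j using Fin.induction with
    | zero =>
      have : v 0 = 1 := by decide
      rw [this]; exact H.one_mem
    | succ j ih =>
      by_cases hj : j = 0
      · subst hj; exact hv1
      · rw [v_succ j hj]
        exact H.mul_mem (H.mul_mem hc ih) (H.inv_mem hc)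
  have hu : ∀ i, u i ∈ H := by
    intro i
    rw [u_word]
    fin_cases i <;>
    · simp
      repeat first | assumption | exact H.one_mem | apply H.mul_mem
  exact H.mul_mem (H.mul_mem (hu _) (hv _)) (H.pow_mem hc _)

theorem f_zero : ∀ i j, ∀ k : Fin 7, (v j * c ^ (k : ℕ)) 0 = 0 ∧ u i 0 = i := by decide

theorem f_one : ∀ k : Fin 7, (c ^ (k : ℕ)) 1 = 1 := by decide

theorem v_inj : ∀ j j', v j 1 = v j' 1 → j = j' := by decide

theorem c_inj : ∀ k k' : Fin 7, (c ^ (k : ℕ)) 2 = (c ^ (k' : ℕ)) 2 → k = k' := by decide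

theorem f_inj : Function.Injective f := by
  rintro ⟨i, j, k⟩ ⟨i', j', k'⟩ h
  simp only [f, mul_assoc] at h
  have h0 := congrArg (fun g : Equiv.Perm (Fin 9) => g 0) h
  simp only [Equiv.Perm.mul_apply (u _)] at h0
  rw [(f_zero i j k).1, (f_zero i' j' k').1, (f_zero i j k).2, (f_zero i' j' k').2] at h0
  subst h0
  have h := mul_left_cancel h
  have h1 := congrArg (fun g : Equiv.Perm (Fin 9) => g 1) h
  simp only [Equiv.Perm.mul_apply (v _), f_one] at h1
  have h1 := v_inj _ _ h1
  subst h1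
  have h := mul_left_cancel h
  have h2 := c_inj _ _ (congrArg (fun g : Equiv.Perm (Fin 9) => g 2) h)
  rw [h2]

theorem card_eq : Nat.card (Subgroup.closure {pS, pR} : Subgroup (Equiv.Perm (Fin 9))) = 504 := by
  have h : ((Subgroup.closure {pS, pR} : Subgroup (Equiv.Perm (Fin 9))) :
      Set (Equiv.Perm (Fin 9))) = Set.range f := by
    ext g
    constructor
    · exact le_range g
    · rintro ⟨p, rfl⟩; exact f_mem p
  change Nat.card ((Subgroup.closure {pS, pR} : Subgroup (Equiv.Perm (Fin 9))) :
      Set (Equiv.Perm (Fin 9))) = 504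
  rw [h, Nat.card_range_of_injective f_inj]
  simp

end Mono

/-- The subgroup of `S₉` generated by `σ_S = (2 5)(3 7)(4 8)(6 9)` and
`σ_R = (1 2 6)(3 8 5)(4 9 7)` has order `504`. (In `Equiv.Perm (Fin 9)` the numeral `9`
denotes the element `0` of `Fin 9`, so the labels `1,…,9` exhaust `Fin 9`.) -/
theorem monodromy_group_order_504 :
    let σS : Equiv.Perm (Fin 9) := c[2, 5] * c[3, 7] * c[4, 8] * c[6, 9]
    let σR : Equiv.Perm (Fin 9) := c[1, 2, 6] * c[3, 8, 5] * c[4, 9, 7]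
    Nat.card (Subgroup.closure {σS, σR} : Subgroup (Equiv.Perm (Fin 9))) = 504 := by
  intro σS σR
  have hS : σS = Mono.pS := by decide
  have hR : σR = Mono.pR := by decide
  rw [hS, hR]
  exact Mono.card_eq
end

section
/- Let σ_S = (2 5)(3 7)(4 8)(6 9) and σ_R = (1 2 6)(3 8 5)(4 9 7) be permutations of {1,…,9}, and let H ≤ S₉ be the subgroup they generate. Then H is isomorphic (as a group) to SL(2, F₈), the group of 2×2 matrices of determinant 1 over the field with 8 elements (which, since its center is trivial in characteristic 2, coincides with PSL(2, F₈)). -/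
open Matrix

/-- A computable model of the field with 8 elements: bit vectors of length 3, as polynomials
over `ZMod 2` modulo `X ^ 3 + X + 1`. -/
def F8 : Type := Fin 8

namespace F8

instance : DecidableEq F8 := inferInstanceAs (DecidableEq (Fin 8))
instance : Fintype F8 := inferInstanceAs (Fintype (Fin 8))

/-- The element with given bit pattern. -/
def mk (n : Fin 8) : F8 := n

/-- The bit pattern of an element. -/
def bits (x : F8) : Fin 8 := x

/-- Discrete logarithm to base `X`. -/
def log (x : F8) : ℕ := [0, 0, 1, 3, 2, 6, 4, 5].getD x.bits.val 0

/-- Powers of `X`. -/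
def exp (n : ℕ) : F8 := mk ([1, 2, 4, 3, 6, 7, 5].getD (n % 7) 0)

instance : Zero F8 := ⟨mk 0⟩
instance : One F8 := ⟨mk 1⟩
instance : Add F8 := ⟨fun x y => mk (x.bits ^^^ y.bits)⟩
instance : Neg F8 := ⟨fun x => x⟩
instance : Mul F8 := ⟨fun x y => if x = 0 then 0 else if y = 0 then 0 else exp (x.log + y.log)⟩
instance : Inv F8 := ⟨fun x => if x = 0 then 0 else exp (7 - x.log)⟩

instance : Field F8 where
  add_assoc := by decide +kernel
  zero_add := by decide +kernel
  add_zero := by decide +kernel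
  add_comm := by decide +kernel
  neg_add_cancel := by decide +kernel
  mul_assoc := by decide +kernel
  mul_comm := by decide +kernel
  one_mul := by decide +kernel
  mul_one := by decide +kernel
  left_distrib := by decide +kernel
  right_distrib := by decide +kernel
  zero_mul := by decide +kernel
  mul_zero := by decide +kernel
  exists_pair_ne := ⟨0, 1, by decide +kernel⟩
  mul_inv_cancel := by decide +kernel
  inv_zero := by decide +kernel
  nsmul := nsmulRec
  zsmul := zsmulRec
  nnqsmul := _
  qsmul := _

/-- The special linear group over the model. -/
abbrev SL : Type := SpecialLinearGroup (Fin 2) F8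

/-- Upper unipotent matrices. -/
def U (x : F8) : SL := ⟨!![1, x; 0, 1], by simp⟩
/-- Lower unipotent matrices. -/
def L (x : F8) : SL := ⟨!![1, 0; x, 1], by simp⟩
lemma coe_mulSL (g h : SL) : ((g * h : SL) : Matrix (Fin 2) (Fin 2) F8) =
    (g : Matrix (Fin 2) (Fin 2) F8) * (h : Matrix (Fin 2) (Fin 2) F8) := rfl
lemma coe_U (x : F8) : (U x : Matrix (Fin 2) (Fin 2) F8) = !![1, x; 0, 1] := rfl
lemma coe_L (x : F8) : (L x : Matrix (Fin 2) (Fin 2) F8) = !![1, 0; x, 1] := rfl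

/-- The Weyl element. -/
def W : SL := ⟨!![0, 1; 1, 0], by decide +kernel⟩
/-- The matrix acting as `σS`. -/
def S : SL := ⟨!![1, 1; 0, 1], by decide +kernel⟩
/-- The matrix acting as `σR`. -/
def R : SL := ⟨!![0, mk 2; mk 5, 1], by decide +kernel⟩

/-- Product of a word in `S` (`true`) and `R` (`false`). -/
def word (l : List Bool) : SL := (l.map fun b => if b then S else R).prod

lemma word_mem (l : List Bool) : word l ∈ Subgroup.closure {S, R} := by
  apply Subgroup.list_prod_mem
  intro x hx
  obtain ⟨b, -, rfl⟩ := List.mem_map.1 hx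
  apply Subgroup.subset_closure
  cases b <;> simp

/-- Words for the upper unipotent matrices. -/
def uWord (x : F8) : List Bool :=
  match x.bits with
  | 0 => []
  | 1 => [true]
  | 2 => [true, false, true, false, false, true, false, true, false, false, true, false, true, false, false, true, false]
  | 3 => [false, true, false, false, true, false, true, false, false, true, false, true, false, false, true, false]
  | 4 => [false, true, false, true, false, false, true, false, true, false, true, false, false, true, false, true, false]
  | 5 => [true, false, true, false, true, false, false, true, false, true, false, true, false, false, true, false, true, false]
  | 6 => [false, true, false, true, false, false, true, false, false, true, false, false, true, false, true, false]
  | 7 => [true, false, true, false, true, false, false, true, false, false, true, false, false, true, false, true, false]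

lemma uWord_spec : ∀ x, word (uWord x) = U x := by decide +kernel

lemma W_spec : word [true, false, false, true, false, true, false, false, true, false, true, false, true, false, false, true, false] = W := by decide +kernel

lemma L_spec : ∀ x, W * U x * W = L x := by decide +kernel

lemma U_mem (x : F8) : U x ∈ Subgroup.closure {S, R} := uWord_spec x ▸ word_mem _

lemma W_mem : W ∈ Subgroup.closure {S, R} := W_spec ▸ word_mem _

lemma L_mem (x : F8) : L x ∈ Subgroup.closure {S, R} :=
  L_spec x ▸ mul_mem (mul_mem W_mem (U_mem x)) W_mem

lemma mem_of_ne (g : SL) (h : g 1 0 ≠ 0) : g ∈ Subgroup.closure {S, R} := by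
  have hd := g.det_coe
  rw [det_fin_two] at hd
  have : g = U ((g 0 0 - 1) / g 1 0) * L (g 1 0) * U ((g 1 1 - 1) / g 1 0) := by
    ext i j
    rw [coe_mulSL, coe_mulSL, coe_U, coe_U, coe_L]
    fin_cases i <;> fin_cases j <;>
      simp [Matrix.mul_apply, Fin.sum_univ_two] <;> field_simp <;> grind
  rw [this]
  exact mul_mem (mul_mem (U_mem _) (L_mem _)) (U_mem _)

lemma closure_eq_top : Subgroup.closure {S, R} = (⊤ : Subgroup SL) := by
  rw [eq_top_iff]
  intro g _
  by_cases h : g 1 0 = 0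
  · have hd := g.det_coe
    rw [det_fin_two] at hd
    have h1 : g * L 1 ∈ Subgroup.closure {S, R} := by
      apply mem_of_ne
      rw [coe_mulSL, coe_L]
      simp [Matrix.mul_apply, Fin.sum_univ_two, h]
      rintro h'
      simp [h, h'] at hd
    exact (Subgroup.mul_mem_cancel_right _ (L_mem 1)).1 h1
  · exact mem_of_ne g h

/-- The labelling of the projective line by `Fin 9`. -/
def label (i : Fin 9) : OnePoint F8 :=
  match i with
  | 0 => ((mk 3 : F8) : OnePoint F8)
  | 1 => OnePoint.infty
  | 2 => ((mk 0 : F8) : OnePoint F8)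
  | 3 => ((mk 5 : F8) : OnePoint F8)
  | 4 => ((mk 7 : F8) : OnePoint F8)
  | 5 => ((mk 1 : F8) : OnePoint F8)
  | 6 => ((mk 2 : F8) : OnePoint F8)
  | 7 => ((mk 4 : F8) : OnePoint F8)
  | 8 => ((mk 6 : F8) : OnePoint F8)

instance : DecidableEq (OnePoint F8) := inferInstanceAs (DecidableEq (Option F8))
instance : Fintype (OnePoint F8) := inferInstanceAs (Fintype (Option F8))

lemma label_bij : Function.Bijective label := by
  constructor
  · unfold Function.Injective
    decide +kernel
  · unfold Function.Surjective
    decide +kernel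

/-- The labelling as an equivalence. -/
noncomputable def labelEquiv : Fin 9 ≃ OnePoint F8 := Equiv.ofBijective label label_bij

/-- The permutation representation on the projective line. -/
noncomputable def rep : SL →* Equiv.Perm (OnePoint F8) :=
  (MulAction.toPermHom (GL (Fin 2) F8) (OnePoint F8)).comp SpecialLinearGroup.toGL

/-- The permutation representation on labels. -/
noncomputable def rep9 : SL →* Equiv.Perm (Fin 9) :=
  (labelEquiv.symm.permCongrHom.toMonoidHom).comp rep

lemma rep_infty (g : SL) : rep g OnePoint.infty =
    if g 1 0 = 0 then OnePoint.infty else ((g 0 0 / g 1 0 : F8) : OnePoint F8) :=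
  OnePoint.smul_infty_eq_ite (SpecialLinearGroup.toGL g)

lemma rep_coe (g : SL) (k : F8) : rep g (k : OnePoint F8) =
    if g 1 0 * k + g 1 1 = 0 then OnePoint.infty
    else (((g 0 0 * k + g 0 1) / (g 1 0 * k + g 1 1) : F8) : OnePoint F8) :=
  OnePoint.smul_some_eq_ite (g := SpecialLinearGroup.toGL g)

/-- Computable version of the action. -/
def act (g : SL) (x : OnePoint F8) : OnePoint F8 :=
  match (x : Option F8) with
  | none => if g 1 0 = 0 then OnePoint.infty else ((g 0 0 / g 1 0 : F8) : OnePoint F8)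
  | some k => if g 1 0 * k + g 1 1 = 0 then OnePoint.infty
    else (((g 0 0 * k + g 0 1) / (g 1 0 * k + g 1 1) : F8) : OnePoint F8)

lemma rep_eq_act (g : SL) (x : OnePoint F8) : rep g x = act g x := by
  cases x with
  | infty => exact rep_infty g
  | coe k => exact rep_coe g k

lemma rep_injective : Function.Injective rep := by
  rw [injective_iff_map_eq_one]
  intro g hg
  have h1 := rep_infty g
  have h2 := rep_coe g 0
  have h3 := rep_coe g 1
  have hd := g.det_coe
  rw [det_fin_two] at hd
  have sq : ∀ x : F8, x * x = 1 → x = 1 := by decide +kernel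
  have hc : g 1 0 = 0 := by
    by_contra h
    simp [hg, h] at h1
  have hne : g 1 1 ≠ 0 := by
    intro h
    simp [hc, h] at hd
  simp only [hg, hc, zero_add, mul_zero, hne, if_false, Equiv.Perm.one_apply,
    OnePoint.coe_eq_coe, mul_one] at h2 h3
  have hb : g 0 1 = 0 := by
    have := h2.symm
    simpa [hne] using this
  have ha : g 0 0 = g 1 1 := by
    rw [hb, add_zero, eq_div_iff hne, one_mul] at h3
    exact h3.symm
  rw [hc, mul_zero, sub_zero, ha] at hd
  have h11 := sq _ hd
  ext i j
  fin_cases i <;> fin_cases j <;> simp [hc, hb, ha, h11]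

lemma rep9_injective : Function.Injective rep9 :=
  labelEquiv.symm.permCongrHom.injective.comp rep_injective

lemma rep9_eq (g : SL) (s : Equiv.Perm (Fin 9)) (h : ∀ i, act g (label i) = label (s i)) :
    rep9 g = s := by
  ext1 i
  change labelEquiv.symm (rep g (label i)) = s i
  rw [Equiv.symm_apply_eq, rep_eq_act, h]
  rfl

end F8

/-- The subgroup of `S₉` generated by `σ_S = (2 5)(3 7)(4 8)(6 9)` and
`σ_R = (1 2 6)(3 8 5)(4 9 7)` is isomorphic to `SL(2, F₈)`, the group of 2×2 matrices
of determinant 1 over the field with 8 elements. (In `Equiv.Perm (Fin 9)` the numeral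
`9` denotes the element `0` of `Fin 9`, so the labels `1,…,9` exhaust `Fin 9`.) -/
theorem monodromy_group_is_SL2_F8 :
    let σS : Equiv.Perm (Fin 9) := c[2, 5] * c[3, 7] * c[4, 8] * c[6, 9]
    let σR : Equiv.Perm (Fin 9) := c[1, 2, 6] * c[3, 8, 5] * c[4, 9, 7]
    Nonempty ((Subgroup.closure {σS, σR} : Subgroup (Equiv.Perm (Fin 9))) ≃*
      Matrix.SpecialLinearGroup (Fin 2) (GaloisField 2 3)) := by
  intro σS σR
  have hS : F8.rep9 F8.S = σS := F8.rep9_eq _ _ (by decide +kernel)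
  have hR : F8.rep9 F8.R = σR := F8.rep9_eq _ _ (by decide +kernel)
  have hrange : F8.rep9.range = Subgroup.closure {σS, σR} := by
    rw [MonoidHom.range_eq_map, ← F8.closure_eq_top, MonoidHom.map_closure, Set.image_pair, hS, hR]
  have : Fintype (GaloisField 2 3) := Fintype.ofFinite _
  have hcard : Fintype.card F8 = Fintype.card (GaloisField 2 3) := by
    rw [← Nat.card_eq_fintype_card (α := GaloisField 2 3), GaloisField.card 2 3 (by norm_num)]
    rfl
  let e : F8 ≃+* GaloisField 2 3 := FiniteField.ringEquivOfCardEq hcard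
  let E : F8.SL ≃* Matrix.SpecialLinearGroup (Fin 2) (GaloisField 2 3) :=
    MonoidHom.toMulEquiv (Matrix.SpecialLinearGroup.map e.toRingHom)
      (Matrix.SpecialLinearGroup.map e.symm.toRingHom)
      (by ext g i j; simp) (by ext g i j; simp)
  rw [← hrange]
  exact ⟨(MonoidHom.ofInjective F8.rep9_injective).symm.trans E⟩
end

section
/- Let σ_S = (1 15)(2 12)(3 7)(4 9)(5 13)(6 10)(8 14) and σ_R = (1 11 12)(2 13 6)(3 8 15)(4 10 7)(5 14 9) be permutations of {1,…,15}. Then the subgroup of S₁₅ generated by σ_S and σ_R has order 9720 (the order of the group (C₃ × C₃ × C₃ × C₃) : (C₂ × A₅)). -/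
namespace Mono

/-- The fifteen points are five blocks of three points. -/
abbrev Pt := Fin 5 × ZMod 3

/-- The permutation `(i, a) ↦ (π i, s a + v i)`. -/
def aff (π : Equiv.Perm (Fin 5)) (s : (ZMod 3)ˣ) (v : Fin 5 → ZMod 3) : Equiv.Perm Pt where
  toFun p := (π p.1, (s : ZMod 3) * p.2 + v p.1)
  invFun p := (π⁻¹ p.1, ((s⁻¹ : (ZMod 3)ˣ) : ZMod 3) * (p.2 - v (π⁻¹ p.1)))
  left_inv p := by
    have h : π⁻¹ (π p.1) = p.1 := π.symm_apply_apply _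
    simp only [h, add_sub_cancel_right, Units.inv_mul_cancel_left]
  right_inv p := by
    have h : π (π⁻¹ p.1) = p.1 := π.apply_symm_apply _
    simp only [h, sub_add_cancel, Units.mul_inv_cancel_left]

theorem aff_apply (π : Equiv.Perm (Fin 5)) (s : (ZMod 3)ˣ) (v : Fin 5 → ZMod 3) (p : Pt) :
    aff π s v p = (π p.1, (s : ZMod 3) * p.2 + v p.1) := rfl

theorem aff_mul (π π' : Equiv.Perm (Fin 5)) (s s' : (ZMod 3)ˣ) (v v' : Fin 5 → ZMod 3) :
    aff π' s' v' * aff π s v = aff (π' * π) (s' * s) (fun i => (s' : ZMod 3) * v i + v' (π i)) := by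
  ext p : 1
  simp only [Equiv.Perm.mul_apply, aff_apply, Units.val_mul]
  refine Prod.ext rfl ?_
  ring

theorem aff_one : aff 1 1 0 = 1 := by
  ext p : 1
  simp [aff_apply]

theorem aff_inj {π π' : Equiv.Perm (Fin 5)} {s s' : (ZMod 3)ˣ} {v v' : Fin 5 → ZMod 3}
    (h : aff π s v = aff π' s' v') : π = π' ∧ s = s' ∧ v = v' := by
  have hp : ∀ p : Pt, aff π s v p = aff π' s' v' p := fun p => by rw [h]
  simp only [aff_apply, Prod.mk.injEq] at hp
  have hv : v = v' := by
    funext i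
    simpa using (hp (i, 0)).2
  refine ⟨Equiv.ext fun i => (hp (i, 0)).1, ?_, hv⟩
  have := (hp (0, 1)).2
  subst hv
  apply Units.ext
  simpa using this

/-- The target group, of order `60 * 2 * 81`. -/
def H : Subgroup (Equiv.Perm Pt) where
  carrier := {g | ∃ π ∈ alternatingGroup (Fin 5), ∃ s, ∃ v : Fin 5 → ZMod 3,
    ∑ i, v i = 0 ∧ g = aff π s v}
  one_mem' := ⟨1, one_mem _, 1, 0, by simp, aff_one.symm⟩
  mul_mem' := by
    rintro _ _ ⟨π', hπ', s', v', hv', rfl⟩ ⟨π, hπ, s, v, hv, rfl⟩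
    refine ⟨π' * π, mul_mem hπ' hπ, s' * s, _, ?_, aff_mul _ _ _ _ _ _⟩
    rw [Finset.sum_add_distrib, ← Finset.mul_sum, hv, Equiv.sum_comp π v', hv']
    simp
  inv_mem' := by
    rintro _ ⟨π, hπ, s, v, hv, rfl⟩
    refine ⟨π⁻¹, inv_mem hπ, s⁻¹, fun i => -(((s⁻¹ : (ZMod 3)ˣ) : ZMod 3) * v (π⁻¹ i)), ?_, ?_⟩
    · rw [Finset.sum_neg_distrib, ← Finset.mul_sum, Equiv.sum_comp π⁻¹ v, hv,
        mul_zero, neg_zero]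
    · rw [inv_eq_iff_mul_eq_one, aff_mul, ← aff_one]
      congr 1
      · simp
      · simp
      · funext i
        rw [mul_neg, Units.mul_inv_cancel_left, neg_add_cancel]
        rfl

theorem card_H : Nat.card H = 9720 := by
  let f : alternatingGroup (Fin 5) × (ZMod 3)ˣ × {v : Fin 5 → ZMod 3 // ∑ i, v i = 0} → H :=
    fun x => ⟨aff x.1 x.2.1 x.2.2, x.1, x.1.2, x.2.1, x.2.2, x.2.2.2, rfl⟩
  have hf : Function.Bijective f := by
    constructor
    · rintro ⟨⟨π, hπ⟩, s, v, hv⟩ ⟨⟨π', hπ'⟩, s', v', hv'⟩ h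
      obtain ⟨h1, h2, h3⟩ := aff_inj (congrArg Subtype.val h)
      subst h1 h2 h3
      rfl
    · rintro ⟨_, π, hπ, s, v, hv, rfl⟩
      exact ⟨⟨⟨π, hπ⟩, s, ⟨v, hv⟩⟩, rfl⟩
  rw [← Nat.card_congr (Equiv.ofBijective f hf), Nat.card_prod, Nat.card_prod]
  have h1 : Nat.card (alternatingGroup (Fin 5)) = 60 := by
    rw [nat_card_alternatingGroup]
    simp [Nat.factorial]
  have h2 : Nat.card (ZMod 3)ˣ = 2 := by
    rw [Nat.card_eq_fintype_card, ZMod.card_units_eq_totient]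
    decide
  have h3 : Nat.card {v : Fin 5 → ZMod 3 // ∑ i, v i = 0} = 81 := by
    rw [Nat.card_eq_fintype_card]
    decide +kernel
  rw [h1, h2, h3]

def piS : Equiv.Perm (Fin 5) where
  toFun := ![1, 0, 4, 3, 2]
  invFun := ![1, 0, 4, 3, 2]
  left_inv := by decide
  right_inv := by decide

def piR : Equiv.Perm (Fin 5) where
  toFun := ![0, 3, 2, 4, 1]
  invFun := ![0, 4, 2, 1, 3]
  left_inv := by decide
  right_inv := by decide

def piTwo : Equiv.Perm (Fin 5) where
  toFun := ![0, 3, 4, 1, 2]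
  invFun := ![0, 3, 4, 1, 2]
  left_inv := by decide
  right_inv := by decide

def piThree : Equiv.Perm (Fin 5) where
  toFun := ![0, 3, 2, 4, 1]
  invFun := ![0, 4, 2, 1, 3]
  left_inv := by decide
  right_inv := by decide

def piFive : Equiv.Perm (Fin 5) where
  toFun := ![3, 2, 0, 4, 1]
  invFun := ![2, 4, 1, 0, 3]
  left_inv := by decide
  right_inv := by decide

/-- The first generator in block coordinates. -/
def gS : Equiv.Perm Pt := aff piS (-1) ![1, 1, 2, 0, 2]

/-- The second generator in block coordinates. -/
def gR : Equiv.Perm Pt := aff piR 1 ![1, 0, 2, 2, 1]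

/-- The generated group in block coordinates. -/
def G : Subgroup (Equiv.Perm Pt) := Subgroup.closure {gS, gR}

theorem G_le_H : G ≤ H := by
  refine (Subgroup.closure_le _).2 ?_
  rintro g (rfl | rfl)
  · exact ⟨piS, by rw [Equiv.Perm.mem_alternatingGroup]; decide +kernel, _, _, by decide, rfl⟩
  · exact ⟨piR, by rw [Equiv.Perm.mem_alternatingGroup]; decide +kernel, _, _, by decide, rfl⟩

/-- A word in the generators. -/
def word (l : List Bool) : Equiv.Perm Pt := (l.map fun b => if b then gS else gR).prod

theorem word_mem (l : List Bool) : word l ∈ G := by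
  refine Subgroup.list_prod_mem _ fun g hg => ?_
  obtain ⟨b, -, rfl⟩ := List.mem_map.1 hg
  cases b
  · exact Subgroup.subset_closure (by simp)
  · exact Subgroup.subset_closure (by simp)

theorem mem_t1 : aff 1 1 ![2, 1, 0, 0, 0] ∈ G := by
  have h : word
    [true, false, true, false, false, true, false, false, true, false, true, false, false,
      true, false, false, true, false, true, false, true, false, false, true, false,
      false, true, false, false, true, false]
      = aff 1 1 ![2, 1, 0, 0, 0] := Equiv.ext (by decide +kernel)
  exact h ▸ word_mem _

theorem mem_t2 : aff 1 1 ![2, 0, 1, 0, 0] ∈ G := by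
  have h : word
    [true, false, true, false, false, true, false, false, true, false, true, false, true,
      false, false, true, false, true, false, true, false, false, true, false, false,
      true, false, true, false]
      = aff 1 1 ![2, 0, 1, 0, 0] := Equiv.ext (by decide +kernel)
  exact h ▸ word_mem _

theorem mem_t3 : aff 1 1 ![2, 0, 0, 1, 0] ∈ G := by
  have h : word
    [true, false, true, false, false, true, false, true, false, true, false, false, true,
      false, false, true, false, true, false, true, false, true, false, false, true,
      false, false, true, false]
      = aff 1 1 ![2, 0, 0, 1, 0] := Equiv.ext (by decide +kernel)
  exact h ▸ word_mem _

theorem mem_t4 : aff 1 1 ![2, 0, 0, 0, 1] ∈ G := by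
  have h : word
    [false, true, false, true, false, false, true, false, true, false, true, false, false,
      true, false, false, true, false, true, false, true, false, true, false, false, true,
      false, false, true]
      = aff 1 1 ![2, 0, 0, 0, 1] := Equiv.ext (by decide +kernel)
  exact h ▸ word_mem _

theorem mem_neg : aff 1 (-1) 0 ∈ G := by
  have h : word
    [true, false, true, false, true, false, true, false, true, false]
      = aff 1 (-1) 0 := Equiv.ext (by decide +kernel)
  exact h ▸ word_mem _

theorem mem_two : aff piTwo 1 0 ∈ G := by
  have h : word
    [true, false, true, false, true, false, false, true, false, true, false, true, false,
      true, false, false, true, false, true, false, true, false, true, false, false, true,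
      false]
      = aff piTwo 1 0 := Equiv.ext (by decide +kernel)
  exact h ▸ word_mem _

theorem mem_three : aff piThree 1 0 ∈ G := by
  have h : word
    [false, true, false, true, false, true, false, true, false, false, true, false, true,
      false, true, false, true, false, false]
      = aff piThree 1 0 := Equiv.ext (by decide +kernel)
  exact h ▸ word_mem _

theorem mem_five : aff piFive 1 0 ∈ G := by
  have h : word
    [true, false, true, false]
      = aff piFive 1 0 := Equiv.ext (by decide +kernel)
  exact h ▸ word_mem _

theorem trans_pow (v : Fin 5 → ZMod 3) (n : ℕ) : aff 1 1 v ^ n = aff 1 1 (n • v) := by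
  induction n with
  | zero => simp [aff_one]
  | succ n ih =>
    rw [pow_succ, ih, aff_mul]
    congr 1
    funext i
    simp only [Pi.smul_apply, Units.val_one, one_mul, Equiv.Perm.one_apply, nsmul_eq_mul]
    push_cast
    ring

theorem trans_mem (v : Fin 5 → ZMod 3) (hv : ∑ i, v i = 0) : aff 1 1 v ∈ G := by
  have h : aff 1 1 v = aff 1 1 ![2, 1, 0, 0, 0] ^ (v 1).val * aff 1 1 ![2, 0, 1, 0, 0] ^ (v 2).val
      * aff 1 1 ![2, 0, 0, 1, 0] ^ (v 3).val * aff 1 1 ![2, 0, 0, 0, 1] ^ (v 4).val := by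
    simp only [trans_pow, aff_mul]
    congr 1
    funext i
    have h3 : (3 : ZMod 3) = 0 := by decide
    rw [Fin.sum_univ_five] at hv
    fin_cases i
    · simp
      linear_combination hv - (v 1 + v 2 + v 3 + v 4) * h3
    all_goals simp
  rw [h]
  exact mul_mem (mul_mem (mul_mem (pow_mem mem_t1 _) (pow_mem mem_t2 _)) (pow_mem mem_t3 _))
    (pow_mem mem_t4 _)

theorem unit_mem (s : (ZMod 3)ˣ) : aff 1 s 0 ∈ G := by
  have h : ∀ s : (ZMod 3)ˣ, s = 1 ∨ s = -1 := by decide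
  rcases h s with rfl | rfl
  · rw [aff_one]
    exact one_mem _
  · exact mem_neg

/-- The complement as a homomorphism. -/
def permHom : alternatingGroup (Fin 5) →* Equiv.Perm Pt where
  toFun π := aff π 1 0
  map_one' := aff_one
  map_mul' π π' := by
    rw [aff_mul]
    congr 1

theorem comap_top : G.comap permHom = ⊤ := by
  set K := G.comap permHom with hK
  have hA : Nat.card (alternatingGroup (Fin 5)) = 60 := by
    rw [nat_card_alternatingGroup]
    simp [Nat.factorial]
  have key : ∀ (p : ℕ) [Fact p.Prime] (π : Equiv.Perm (Fin 5)), π.sign = 1 → aff π 1 0 ∈ G →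
      π ^ p = 1 → π ≠ 1 → p ∣ Nat.card K := by
    intro p _ π h1 h2 h3 h4
    let k : K := ⟨⟨π, Equiv.Perm.mem_alternatingGroup.2 h1⟩, h2⟩
    have : orderOf k = p := by
      apply orderOf_eq_prime
      · exact Subtype.ext (Subtype.ext h3)
      · intro h
        exact h4 (congrArg (fun x : K => ((x : alternatingGroup (Fin 5)) : Equiv.Perm (Fin 5))) h)
    rw [← this]
    exact orderOf_dvd_natCard k
  have : Fact (Nat.Prime 5) := ⟨by norm_num⟩
  have k2 : 2 ∣ Nat.card K :=
    key 2 piTwo (by decide +kernel) mem_two (by decide +kernel) (by decide +kernel)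
  have k3 : 3 ∣ Nat.card K :=
    key 3 piThree (by decide +kernel) mem_three (by decide +kernel) (by decide +kernel)
  have k5 : 5 ∣ Nat.card K :=
    key 5 piFive (by decide +kernel) mem_five (by decide +kernel) (by decide +kernel)
  have k30 : 30 ∣ Nat.card K := by omega
  obtain ⟨m, hm⟩ := k30
  have hidx := K.card_mul_index
  rw [hA, hm] at hidx
  have hi : m * K.index = 2 := by linarith
  have hi2 : K.index ∣ 2 := Dvd.intro_left _ hi
  rcases (Nat.dvd_prime Nat.prime_two).1 hi2 with h | h
  · exact Subgroup.index_eq_one.1 h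
  · have hn : K.Normal := Subgroup.normal_of_index_eq_two h
    have := alternatingGroup.isSimpleGroup_five
    rcases hn.eq_bot_or_eq_top with h' | h'
    · rw [h', Subgroup.card_bot] at hm
      omega
    · exact h'

theorem H_le_G : H ≤ G := by
  rintro _ ⟨π, hπ, s, v, hv, rfl⟩
  have hp : aff π 1 0 ∈ G := by
    have : (⟨π, hπ⟩ : alternatingGroup (Fin 5)) ∈ G.comap permHom := by
      rw [comap_top]
      trivial
    exact this
  have h : aff π s v = aff π 1 0 * aff 1 s 0 * aff 1 1 (fun i => ((s⁻¹ : (ZMod 3)ˣ) : ZMod 3) * v i)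
      := by
    rw [aff_mul, aff_mul]
    congr 1
    · simp
    · funext i
      simp only [one_mul, Units.mul_inv_cancel_left, Pi.zero_apply, mul_zero, add_zero]
  rw [h]
  refine mul_mem (mul_mem hp (unit_mem s)) (trans_mem _ ?_)
  rw [← Finset.mul_sum, hv, mul_zero]

theorem card_G : Nat.card G = 9720 := by
  rw [le_antisymm G_le_H H_le_G, card_H]

/-- The block coordinates. -/
def coord : Fin 15 ≃ Pt where
  toFun := ![(0, 1), (1, 0), (2, 0), (0, 2), (3, 2), (4, 0), (2, 1), (1, 2), (0, 0), (3, 1), (4, 1), (3, 0), (4, 2), (2, 2), (1, 1)]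
  invFun p := (![![8, 0, 3], ![1, 14, 7], ![2, 6, 13], ![11, 9, 4], ![5, 10, 12]] : Fin 5 → Fin 3 → Fin 15) p.1 p.2
  left_inv := by decide
  right_inv := by decide

end Mono

/-- The subgroup of `S₁₅` generated by
`σ_S = (1 15)(2 12)(3 7)(4 9)(5 13)(6 10)(8 14)` and
`σ_R = (1 11 12)(2 13 6)(3 8 15)(4 10 7)(5 14 9)` has order `9720`, the order of
`(C₃ × C₃ × C₃ × C₃) : (C₂ × A₅)`. (In `Equiv.Perm (Fin 15)` the numeral `15` denotes
the element `0` of `Fin 15`, so the labels `1,…,15` exhaust `Fin 15`.) -/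
theorem monodromy_group_order_9720 :
    let σS : Equiv.Perm (Fin 15) :=
      c[1, 15] * c[2, 12] * c[3, 7] * c[4, 9] * c[5, 13] * c[6, 10] * c[8, 14]
    let σR : Equiv.Perm (Fin 15) :=
      c[1, 11, 12] * c[2, 13, 6] * c[3, 8, 15] * c[4, 10, 7] * c[5, 14, 9]
    Nat.card (Subgroup.closure {σS, σR} : Subgroup (Equiv.Perm (Fin 15))) = 9720 := by
  intro σS σR
  have hS : Mono.coord.permCongrHom σS = Mono.gS := Equiv.ext (by decide +kernel)
  have hR : Mono.coord.permCongrHom σR = Mono.gR := Equiv.ext (by decide +kernel)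
  have h : (Subgroup.closure {σS, σR}).map Mono.coord.permCongrHom.toMonoidHom = Mono.G := by
    rw [MonoidHom.map_closure, Set.image_pair]
    change Subgroup.closure {Mono.coord.permCongrHom σS, Mono.coord.permCongrHom σR} = Mono.G
    rw [hS, hR]
    rfl
  rw [← Mono.card_G, ← h]
  exact Nat.card_congr (Subgroup.equivMapOfInjective _ _ Mono.coord.permCongrHom.injective).toEquiv
end

section
/- The polynomial p(v) = v²⁴ − 6v²³ + 21v²² − 60v²¹ + 184v²⁰ − 478v¹⁹ + 651v¹⁸ − 1220v¹⁷ + 2230v¹⁶ + 1226v¹⁵ − 947v¹⁴ + 804v¹³ − 7092v¹² − 6862v¹¹ + 3971v¹⁰ − 15340v⁹ + 7975v⁸ + 36044v⁷ + 7134v⁶ + 14896v⁵ + 13928v⁴ − 2372v³ + 3970v² − 584v + 22 is irreducible over ℚ. -/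
open Polynomial

namespace Deg24

/-- Evaluate the natural number `n` and pass it on. -/
def forceN {β : Type} (n : ℕ) (k : ℕ → β) : β :=
  match n with
  | 0 => k 0
  | m + 1 => k (m + 1)

theorem forceN_eq {β : Type} (n : ℕ) (k : ℕ → β) : forceN n k = k n := by
  cases n <;> rfl

/-- Evaluate the list `l` and pass it on. -/
def forceL {β : Type} : List ℕ → (List ℕ → β) → β
  | [], k => k []
  | a :: as, k => forceN a fun a' => forceL as fun as' => k (a' :: as')

theorem forceL_eq {β : Type} (l : List ℕ) (k : List ℕ → β) : forceL l k = k l := by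
  induction l generalizing k with
  | nil => rfl
  | cons a as ih => simp [forceL, forceN_eq, ih]

/-- `a + c * b` modulo 19, coefficientwise (lists start with the constant coefficient). -/
def addmul (c : ℕ) : List ℕ → List ℕ → List ℕ
  | a :: as, b :: bs => ((a + c * b) % 19) :: addmul c as bs
  | as, [] => as
  | [], b :: bs => ((c * b) % 19) :: addmul c [] bs

/-- The remainder of `X ^ 24` modulo the polynomial, over `ZMod 19`. -/
def R : List ℕ := [16, 14, 1, 16, 18, 0, 10, 18, 5, 7, 0, 3, 5, 13, 16, 9, 12, 4, 14, 3, 6, 3, 17, 6]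

def split : ℕ → List ℕ → List ℕ × List ℕ
  | 0, l => ([], l)
  | _ + 1, [] => ([], [])
  | n + 1, a :: l => (a :: (split n l).1, (split n l).2)

/-- Reduce a list of length 25 to one of length 24. -/
def red (l : List ℕ) : List ℕ :=
  match (split 24 l).2 with
  | [c] => addmul c (split 24 l).1 R
  | _ => l

def mulmod : List ℕ → List ℕ → List ℕ
  | [], _ => []
  | a :: as, b => forceL (mulmod as b) fun t => forceL (red (0 :: t)) fun s => addmul a s b

def pow19 (h : List ℕ) : List ℕ :=
  forceL (mulmod h h) fun h2 => forceL (mulmod h2 h2) fun h4 =>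
  forceL (mulmod h4 h4) fun h8 => forceL (mulmod h8 h8) fun h16 =>
  forceL (mulmod h16 h2) fun h18 => mulmod h18 h

/-- The product of `h_i - X` for the next `n` Frobenius iterates `h_i` of `h`, times `acc`. -/
def loop : ℕ → List ℕ → List ℕ → List ℕ
  | 0, _, acc => acc
  | n + 1, h, acc => forceL (pow19 h) fun h' =>
      forceL (mulmod (addmul 18 h' [0, 1]) acc) fun acc' => loop n h' acc'

def U : List ℕ := [17, 6, 15, 0, 18, 1, 4, 18, 2, 5, 13, 18, 3, 9, 14, 17, 18, 4, 7, 11, 7, 13, 10, 9]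

theorem check : loop 12 [0, 1] U = [1, 0, 0, 0, 0, 0, 0, 0, 0, 0, 0, 0, 0, 0, 0, 0, 0, 0, 0, 0, 0, 0, 0, 0] := by
  decide +kernel

section sound

variable {L : Type*} [Field L] (α : L)

def ev : List ℕ → L
  | [] => 0
  | a :: as => (a : L) + α * ev as

variable (h19 : (19 : L) = 0)
include h19

theorem cast_mod (n : ℕ) : ((n % 19 : ℕ) : L) = (n : L) := by
  conv_rhs => rw [← Nat.mod_add_div n 19]
  push_cast
  rw [h19]; ring

theorem ev_addmul (c : ℕ) (a b : List ℕ) :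
    ev α (addmul c a b) = ev α a + (c : L) * ev α b := by
  induction b generalizing a with
  | nil => cases a <;> simp [addmul, ev]
  | cons b bs ih =>
    cases a with
    | nil => simp only [addmul, ev, cast_mod h19, ih]; push_cast; ring
    | cons a as => simp only [addmul, ev, cast_mod h19, ih]; push_cast; ring

omit h19 in
theorem ev_split (n : ℕ) (l : List ℕ) :
    ev α l = ev α (split n l).1 + α ^ n * ev α (split n l).2 := by
  induction n generalizing l with
  | zero => simp [split, ev]
  | succ n ih =>
    cases l with
    | nil => simp [split, ev]
    | cons a l => simp only [split, ev]; rw [ih l]; ring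

variable (hR : α ^ 24 = ev α R)
include hR

theorem ev_red (l : List ℕ) : ev α (red l) = ev α l := by
  unfold red
  split
  · next c hc =>
    rw [ev_addmul α h19, ev_split α 24 l, hc, hR]
    simp [ev]; ring
  · rfl

theorem ev_mulmod (a b : List ℕ) : ev α (mulmod a b) = ev α a * ev α b := by
  induction a with
  | nil => simp [mulmod, ev]
  | cons a as ih =>
    simp only [mulmod, forceL_eq, ev_addmul α h19, ev_red α h19 hR, ev, ih]
    push_cast; ring

theorem ev_pow19 (h : List ℕ) : ev α (pow19 h) = ev α h ^ 19 := by
  simp only [pow19, forceL_eq, ev_mulmod α h19 hR]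
  ring

theorem ev_loop_acc (n : ℕ) (h acc : List ℕ) (h0 : ev α acc = 0) :
    ev α (loop n h acc) = 0 := by
  induction n generalizing h acc with
  | zero => simpa [loop] using h0
  | succ n ih =>
    simp only [loop, forceL_eq]
    apply ih
    rw [ev_mulmod α h19 hR, h0, mul_zero]

theorem ev_loop (n : ℕ) (h acc : List ℕ) (d : ℕ) (hd : d < n)
    (hz : ev α h ^ (19 ^ (d + 1)) = α) : ev α (loop n h acc) = 0 := by
  induction n generalizing h acc d with
  | zero => omega
  | succ n ih =>
    simp only [loop, forceL_eq]
    cases d with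
    | zero =>
      apply ev_loop_acc α h19 hR
      rw [ev_mulmod α h19 hR, ev_addmul α h19, ev_pow19 α h19 hR]
      have : ev α h ^ 19 = α := by simpa using hz
      rw [this]
      simp only [ev]
      push_cast
      linear_combination α * ev α acc * h19
    | succ d =>
      apply ih _ _ d (by omega)
      rw [ev_pow19 α h19 hR, ← pow_mul, ← pow_succ']
      exact hz

theorem no_small (d : ℕ) (h1 : 0 < d) (h2 : d ≤ 12) (hz : α ^ (19 ^ d) = α) : False := by
  obtain ⟨d, rfl⟩ : ∃ e, d = e + 1 := ⟨d - 1, by omega⟩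
  have := ev_loop α h19 hR 12 [0, 1] U d (by omega) (by simpa [ev] using hz)
  rw [check] at this
  simp [ev] at this

end sound

theorem root_rel {L : Type*} [Field L] (α : L) (h19 : (19 : L) = 0)
    (h : (α ^ 24 - 6 * α ^ 23 + 21 * α ^ 22 - 60 * α ^ 21 + 184 * α ^ 20
        - 478 * α ^ 19 + 651 * α ^ 18 - 1220 * α ^ 17 + 2230 * α ^ 16 + 1226 * α ^ 15
        - 947 * α ^ 14 + 804 * α ^ 13 - 7092 * α ^ 12 - 6862 * α ^ 11 + 3971 * α ^ 10
        - 15340 * α ^ 9 + 7975 * α ^ 8 + 36044 * α ^ 7 + 7134 * α ^ 6 + 14896 * α ^ 5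
        + 13928 * α ^ 4 - 2372 * α ^ 3 + 3970 * α ^ 2 - 584 * α + 22) = 0) :
    α ^ 24 = ev α R := by
  simp only [R, ev, Nat.cast_ofNat, Nat.cast_one, Nat.cast_zero]
  linear_combination h - ((2) * α ^ 0 + (-30) * α ^ 1 + (209) * α ^ 2 + (-124) * α ^ 3 + (734) * α ^ 4 + (784) * α ^ 5 + (376) * α ^ 6 + (1898) * α ^ 7 + (420) * α ^ 8 + (-807) * α ^ 9 + (209) * α ^ 10 + (-361) * α ^ 11 + (-373) * α ^ 12 + (43) * α ^ 13 + (-49) * α ^ 14 + (65) * α ^ 15 + (118) * α ^ 16 + (-64) * α ^ 17 + (35) * α ^ 18 + (-25) * α ^ 19 + (10) * α ^ 20 + (-3) * α ^ 21 + (2) * α ^ 22 + (0) * α ^ 23) * h19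

instance : Fact (Nat.Prime 19) := ⟨by norm_num⟩

noncomputable def fZ : ℤ[X] :=
  ((X : ℤ[X]) ^ 24 - 6 * X ^ 23 + 21 * X ^ 22 - 60 * X ^ 21 + 184 * X ^ 20
        - 478 * X ^ 19 + 651 * X ^ 18 - 1220 * X ^ 17 + 2230 * X ^ 16 + 1226 * X ^ 15
        - 947 * X ^ 14 + 804 * X ^ 13 - 7092 * X ^ 12 - 6862 * X ^ 11 + 3971 * X ^ 10
        - 15340 * X ^ 9 + 7975 * X ^ 8 + 36044 * X ^ 7 + 7134 * X ^ 6 + 14896 * X ^ 5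
        + 13928 * X ^ 4 - 2372 * X ^ 3 + 3970 * X ^ 2 - 584 * X + 22)

theorem fZ_monic : fZ.Monic := by
  unfold fZ; monicity!

theorem fZ_natDegree : fZ.natDegree = 24 := by
  unfold fZ; compute_degree!

theorem aeval_fZ {L : Type*} [Field L] [Algebra (ZMod 19) L] (α : L) :
    aeval α (fZ.map (Int.castRingHom (ZMod 19))) =
      (α ^ 24 - 6 * α ^ 23 + 21 * α ^ 22 - 60 * α ^ 21 + 184 * α ^ 20
        - 478 * α ^ 19 + 651 * α ^ 18 - 1220 * α ^ 17 + 2230 * α ^ 16 + 1226 * α ^ 15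
        - 947 * α ^ 14 + 804 * α ^ 13 - 7092 * α ^ 12 - 6862 * α ^ 11 + 3971 * α ^ 10
        - 15340 * α ^ 9 + 7975 * α ^ 8 + 36044 * α ^ 7 + 7134 * α ^ 6 + 14896 * α ^ 5
        + 13928 * α ^ 4 - 2372 * α ^ 3 + 3970 * α ^ 2 - 584 * α + 22) := by
  rw [aeval_def, eval₂_map]
  simp only [fZ, eval₂_add, eval₂_sub, eval₂_mul, eval₂_pow, eval₂_X, eval₂_ofNat]

theorem irr19 : Irreducible (fZ.map (Int.castRingHom (ZMod 19))) := by
  have hm : (fZ.map (Int.castRingHom (ZMod 19))).Monic := fZ_monic.map _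
  have hdeg : (fZ.map (Int.castRingHom (ZMod 19))).natDegree = 24 := by
    rw [fZ_monic.natDegree_map, fZ_natDegree]
  have hne : fZ.map (Int.castRingHom (ZMod 19)) ≠ 1 := by
    intro h; rw [h] at hdeg; simp at hdeg
  rw [hm.irreducible_iff_lt_natDegree_lt hne]
  intro q hq hqd hdvd
  rw [hdeg, Finset.mem_Ioc] at hqd
  have hqu : ¬ IsUnit q := by
    intro hu
    have := natDegree_eq_zero_of_isUnit hu
    omega
  obtain ⟨g, hg, hgq⟩ := WfDvdMonoid.exists_irreducible_factor hqu hq.ne_zero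
  have hgd : g.natDegree ≤ 12 := (natDegree_le_of_dvd hgq hq.ne_zero).trans hqd.2
  have hg0 : 0 < g.natDegree := hg.natDegree_pos
  have : Fact (Irreducible g) := ⟨hg⟩
  let pb := AdjoinRoot.powerBasis hg.ne_zero
  have : Module.Finite (ZMod 19) (AdjoinRoot g) := pb.finite
  have : Finite (AdjoinRoot g) := Module.finite_of_finite (ZMod 19)
  have := Fintype.ofFinite (AdjoinRoot g)
  have hcard : Fintype.card (AdjoinRoot g) = 19 ^ g.natDegree := by
    rw [Module.card_eq_pow_finrank (K := ZMod 19), ZMod.card, pb.finrank,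
      AdjoinRoot.powerBasis_dim]
  have hfrob := FiniteField.pow_card (AdjoinRoot.root g)
  rw [hcard] at hfrob
  have h19 : (19 : AdjoinRoot g) = 0 := by
    have h : ((19 : ℕ) : ZMod 19) = 0 := ZMod.natCast_self 19
    have := congrArg (algebraMap (ZMod 19) (AdjoinRoot g)) h
    rwa [map_natCast, map_zero, Nat.cast_ofNat] at this
  refine no_small (AdjoinRoot.root g) h19 (root_rel _ h19 ?_) g.natDegree hg0 hgd hfrob
  have hr : aeval (AdjoinRoot.root g) (fZ.map (Int.castRingHom (ZMod 19))) = 0 := by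
    rw [AdjoinRoot.aeval_eq, AdjoinRoot.mk_eq_zero]
    exact hgq.trans hdvd
  rwa [aeval_fZ] at hr

theorem irrZ : Irreducible fZ :=
  fZ_monic.irreducible_of_irreducible_map _ _ irr19

end Deg24

/-- The degree-24 polynomial defining the number field `K` of the passport
`16_0_3_2_1_11_a` is irreducible over `ℚ`. -/
theorem degree_24_field_polynomial_irreducible :
    Irreducible
      ((X : ℚ[X]) ^ 24 - 6 * X ^ 23 + 21 * X ^ 22 - 60 * X ^ 21 + 184 * X ^ 20
        - 478 * X ^ 19 + 651 * X ^ 18 - 1220 * X ^ 17 + 2230 * X ^ 16 + 1226 * X ^ 15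
        - 947 * X ^ 14 + 804 * X ^ 13 - 7092 * X ^ 12 - 6862 * X ^ 11 + 3971 * X ^ 10
        - 15340 * X ^ 9 + 7975 * X ^ 8 + 36044 * X ^ 7 + 7134 * X ^ 6 + 14896 * X ^ 5
        + 13928 * X ^ 4 - 2372 * X ^ 3 + 3970 * X ^ 2 - 584 * X + 22) := by
  have h := (Deg24.fZ_monic.irreducible_iff_irreducible_map_fraction_map (K := ℚ)).1 Deg24.irrZ
  simpa [Deg24.fZ] using h
end

section
/- The Galois group over ℚ of the polynomial p(v) = v²⁴ − 6v²³ + 21v²² − 60v²¹ + 184v²⁰ − 478v¹⁹ + 651v¹⁸ − 1220v¹⁷ + 2230v¹⁶ + 1226v¹⁵ − 947v¹⁴ + 804v¹³ − 7092v¹² − 6862v¹¹ + 3971v¹⁰ − 15340v⁹ + 7975v⁸ + 36044v⁷ + 7134v⁶ + 14896v⁵ + 13928v⁴ − 2372v³ + 3970v² − 584v + 22 (i.e. the Galois group of its splitting field over ℚ) is isomorphic to the full symmetric group S₂₄ on 24 letters. -/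
open Polynomial


theorem grp24 {α : Type*} [Fintype α] [DecidableEq α] (hα : Fintype.card α = 24)
    (G : Subgroup (Equiv.Perm α)) (c t s : Equiv.Perm α) (hcG : c ∈ G) (htG : t ∈ G) (hsG : s ∈ G)
    (hc : c ^ 23 = 1) (hfix : ∀ a b, c a = a → c b = b → a = b)
    (ht : ∀ a, t a ≠ a) (hs : s.IsSwap) : G = ⊤ := by
  have hp : Nat.Prime 23 := by norm_num
  have hsup : 23 ≤ c.support.card := by
    have h1 : (c.supportᶜ).card ≤ 1 := by
      rw [Finset.card_le_one]
      intro a ha b hb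
      simp only [Finset.mem_compl, Equiv.Perm.notMem_support] at ha hb
      exact hfix a b ha hb
    rw [Finset.card_compl] at h1
    omega
  have hc1 : c ≠ 1 := by
    rintro rfl
    simp at hsup
  have hord : orderOf c = 23 := by
    have : Fact (Nat.Prime 23) := ⟨hp⟩
    exact orderOf_eq_prime hc hc1
  have hle : c.support.card ≤ 24 := hα ▸ Finset.card_le_univ _
  have hcyc : c.IsCycle := by
    apply Equiv.Perm.isCycle_of_prime_order (hord ▸ hp)
    rw [hord]; omega
  have hcard : c.support.card = 23 := by rw [← hcyc.orderOf, hord]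
  obtain ⟨a0, ha0⟩ : ∃ a0, a0 ∉ c.support := by
    by_contra! h
    have : c.support = Finset.univ := by ext; simp [h]
    rw [this, Finset.card_univ] at hcard
    omega
  have ha0' : c a0 = a0 := by simpa using ha0
  have hmv : ∀ x, x ≠ a0 → c x ≠ x := fun x hx h => hx (hfix _ _ h ha0')
  have hfixpow : ∀ i : ℤ, (c ^ i) a0 = a0 := fun i =>
    Equiv.Perm.zpow_apply_eq_self_of_apply_eq_self ha0' i
  have hmove : ∀ x y, x ≠ a0 → y ≠ a0 → ∃ i : ℤ, (c ^ i) x = y := fun x y hx hy =>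
    hcyc.exists_zpow_eq (hmv x hx) (hmv y hy)
  have hto : ∀ a, ∃ g ∈ G, g a = a0 := by
    intro a
    by_cases h : a = a0
    · exact ⟨1, G.one_mem, by simp [h]⟩
    · have h2 : t⁻¹ a0 ≠ a0 := by
        intro h3
        rw [Equiv.Perm.inv_eq_iff_eq] at h3
        exact ht a0 h3.symm
      obtain ⟨i, hi⟩ := hmove a _ h h2
      exact ⟨t * c ^ i, G.mul_mem htG (G.zpow_mem hcG i), by simp [hi]⟩
  obtain ⟨b0, hb0⟩ : ∃ b0, b0 ≠ a0 := ⟨t a0, ht a0⟩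
  have hto2 : ∀ a b, a ≠ b → ∃ g ∈ G, g a = a0 ∧ g b = b0 := by
    intro a b hab
    obtain ⟨g, hg, hga⟩ := hto a
    have : g b ≠ a0 := by
      rw [← hga]; exact fun h => hab (g.injective h).symm
    obtain ⟨i, hi⟩ := hmove _ _ this hb0
    exact ⟨c ^ i * g, G.mul_mem (G.zpow_mem hcG i) hg, by simp [hga, hfixpow], by simp [hi]⟩
  have h2t : MulAction.IsMultiplyPretransitive G α 2 := by
    rw [MulAction.is_two_pretransitive_iff]
    intro a b d e hab hde
    obtain ⟨g, hg, g1, g2⟩ := hto2 a b hab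
    obtain ⟨k, hk, k1, k2⟩ := hto2 d e hde
    refine ⟨⟨k⁻¹ * g, G.mul_mem (G.inv_mem hk) hg⟩, ?_, ?_⟩
    · change (k⁻¹ * g) a = d
      rw [Equiv.Perm.mul_apply, Equiv.Perm.inv_eq_iff_eq, g1, k1]
    · change (k⁻¹ * g) b = e
      rw [Equiv.Perm.mul_apply, Equiv.Perm.inv_eq_iff_eq, g2, k2]
  exact Equiv.Perm.subgroup_eq_top_of_isPreprimitive_of_isSwap_mem
    (MulAction.isPreprimitive_of_is_two_pretransitive h2t) s hs hsG

open NumberField in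
theorem exists_frob (f : ℤ[X]) (hm : f.Monic) (p : ℕ) (hp : p.Prime)
    (hsep : ∀ (k : Type) [Field k] [CharP k p] (r : k), aeval r f = 0 →
      aeval r (derivative f) ≠ 0)
    (E : Type) [Field E] [NumberField E] [IsGalois ℚ E] :
    (∀ a : E, aeval a f = 0 → aeval a (derivative f) ≠ 0) ∧
    ∃ (φ : Gal(E/ℚ)) (k : Type) (_ : Field k) (_ : CharP k p) (ρ : {a : E // aeval a f = 0} → k),
      Function.Injective ρ ∧ (∀ a, aeval (ρ a) f = 0) ∧
      ∀ a b : {a : E // aeval a f = 0}, (b : E) = φ a → ρ b = ρ a ^ p := by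
  have hpz : Prime (p : ℤ) := Nat.prime_iff_prime_int.mp hp
  have hp0 : (p : ℤ) ≠ 0 := hpz.ne_zero
  let P : Ideal ℤ := Ideal.span {(p : ℤ)}
  have hPp : P.IsPrime := (Ideal.span_singleton_prime hp0).mpr hpz
  have hPm : P.IsMaximal := hPp.isMaximal (by simp [P, hp.ne_zero])
  obtain ⟨Q, hQ, hQP⟩ := Ideal.exists_maximal_ideal_liesOver_of_isIntegral P (S := 𝓞 E)
  have hcardP : Nat.card (ℤ ⧸ Q.under ℤ) = p := by
    rw [← hQP.over]; exact Int.card_ideal_quot p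
  have hfin : Finite (𝓞 E ⧸ Q) :=
    Q.finiteQuotientOfFreeOfNeBot (Q.bot_lt_of_maximal (RingOfIntegers.not_isField E)).ne'
  obtain ⟨φ, hφ⟩ := IsArithFrobAt.exists_of_isInvariant ℤ Gal(E/ℚ) Q
  obtain ⟨k, hk, hchar, ψ, hψ⟩ : ∃ (k : Type) (_ : Field k) (_ : CharP k p) (ψ : 𝓞 E →+* k),
      ∀ x, ψ (φ • x) = ψ x ^ p := by
    let _ : Field (𝓞 E ⧸ Q) := Ideal.Quotient.field Q
    have hpQ : ((p : ℕ) : 𝓞 E ⧸ Q) = 0 := by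
      have : (p : ℤ) ∈ Q.under ℤ := by
        rw [← hQP.over]; exact Ideal.mem_span_singleton_self _
      have h2 : algebraMap ℤ (𝓞 E) p ∈ Q := this
      have h3 := Ideal.Quotient.eq_zero_iff_mem.mpr h2
      simpa using h3
    refine ⟨𝓞 E ⧸ Q, inferInstance, (CharP.charP_iff_prime_eq_zero hp).mpr hpQ,
      Ideal.Quotient.mk Q, fun x => ?_⟩
    have h2 := hφ.mk_apply x
    rw [hcardP] at h2
    exact h2
  have hIntegral : ∀ a : E, aeval a f = 0 → IsIntegral ℤ a := fun a ha =>
    ⟨f, hm, by simpa [aeval_def] using ha⟩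
  let lift : {a : E // aeval a f = 0} → 𝓞 E := fun a => ⟨a.1, hIntegral a.1 a.2⟩
  have hinj0 : Function.Injective (algebraMap (𝓞 E) E) := RingOfIntegers.coe_injective
  have hlift : ∀ a, algebraMap (𝓞 E) E (lift a) = a := fun a => rfl
  have hae : ∀ (g : ℤ[X]) a, algebraMap (𝓞 E) E (aeval (lift a) g) = aeval (a : E) g := by
    intro g a
    rw [← aeval_algebraMap_apply, hlift]
  have hmk : ∀ (g : ℤ[X]) (x : 𝓞 E), ψ (aeval x g) = aeval (ψ x) g := by
    intro g x
    exact (aeval_algHom_apply ψ.toIntAlgHom x g).symm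
  have hliftroot : ∀ a, aeval (lift a) f = 0 := by
    intro a
    apply hinj0
    rw [hae, map_zero, a.2]
  have hroot : ∀ a, aeval (ψ (lift a)) f = 0 := by
    intro a
    rw [← hmk, hliftroot, map_zero]
  refine ⟨?_, φ, k, hk, hchar, fun a => ψ (lift a),
    ?_, hroot, ?_⟩
  · intro a ha h
    apply hsep k _ (hroot ⟨a, ha⟩)
    rw [← hmk]
    have : aeval (lift ⟨a, ha⟩) (derivative f) = 0 := by
      apply hinj0
      rw [hae, map_zero, h]
    rw [this, map_zero]
  · intro a b hab
    by_contra hne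
    have hne' : lift b - lift a ≠ 0 := by
      intro h
      apply hne
      apply Subtype.ext
      rw [← hlift a, ← hlift b, sub_eq_zero.mp h]
    let g : (𝓞 E)[X] := f.map (algebraMap ℤ (𝓞 E))
    have hga : g.IsRoot (lift a) := by
      rw [IsRoot, eval_map_algebraMap]; exact hliftroot a
    obtain ⟨u, hu⟩ := dvd_iff_isRoot.mpr hga
    have hub : u.IsRoot (lift b) := by
      have h1 : g.eval (lift b) = 0 := by rw [eval_map_algebraMap]; exact hliftroot b
      rw [hu] at h1
      simp only [eval_mul, eval_sub, eval_X, eval_C, mul_eq_zero] at h1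
      exact h1.resolve_left hne'
    obtain ⟨w, hw⟩ := dvd_iff_isRoot.mpr hub
    apply hsep k _ (hroot a)
    rw [← hmk, ← eval_map_algebraMap, ← derivative_map]
    change ψ (eval (lift a) (derivative g)) = 0
    rw [hu, hw]
    simp only [derivative_mul, derivative_X, derivative_C, eval_add, eval_mul,
      eval_sub, eval_X, eval_C, map_add, map_mul, map_sub]
    have hab' : ψ (lift a) = ψ (lift b) := hab
    rw [hab']
    simp
  · intro a b hb
    have h1 : lift b = φ • lift a := by
      apply hinj0
      rw [hlift, hb]
      rfl
    have h2 := hψ (lift a)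
    rw [← h1] at h2
    exact h2

/-- Evaluation of a little-endian coefficient list. -/
def ev {k : Type} [Field k] : List ℕ → k → k
  | [], _ => 0
  | c :: l, r => (c : k) + r * ev l r

def addL : List ℕ → List ℕ → List ℕ
  | [], b => b
  | a :: as, [] => a :: as
  | a :: as, b :: bs => (a + b) :: addL as bs

def scaleL (c : ℕ) : List ℕ → List ℕ
  | [] => []
  | a :: as => (c * a) :: scaleL c as

def mulL : List ℕ → List ℕ → List ℕ
  | [], _ => []
  | a :: as, b => addL (scaleL a b) (0 :: mulL as b)

def isZ (p : ℕ) : List ℕ → Bool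
  | [] => true
  | a :: as => (a % p).beq 0 && isZ p as

def lastD : ℕ → List ℕ → ℕ
  | d, [] => d
  | _, a :: as => lastD a as

/-- One fused Horner step: `X * l + c * b`, where `last * X ^ n` is replaced by `last * g`. -/
def step (p last c : ℕ) : ℕ → List ℕ → List ℕ → List ℕ → List ℕ
  | prev, l0 :: ls, g :: gs, b :: bs =>
    ((prev + last * g + c * b) % p) :: step p last c l0 ls gs bs
  | _, _, _, _ => []

def mulM (p : ℕ) (g b z : List ℕ) : List ℕ → List ℕ
  | [] => z
  | a :: as => (fun l => step p (lastD 0 l) a 0 l g b) (mulM p g b z as)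

def zeros : List ℕ → List ℕ
  | [] => []
  | _ :: as => 0 :: zeros as

def pwM (p : ℕ) (g : List ℕ) : List ℕ → List ℕ → List ℕ
  | [], acc => acc
  | 0 :: bs, acc => pwM p g bs (mulM p g acc (zeros g) acc)
  | (_ + 1) :: bs, acc =>
    pwM p g bs ((fun l => step p (lastD 0 l) 0 0 l g l) (mulM p g acc (zeros g) acc))

def expo : List ℕ → ℕ → ℕ
  | [], e => e
  | 0 :: bs, e => expo bs (2 * e)
  | (_ + 1) :: bs, e => expo bs (2 * e + 1)

def beqL : List ℕ → List ℕ → Bool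
  | [], [] => true
  | a :: as, b :: bs => a.beq b && beqL as bs
  | _, _ => false

theorem beqL_eq : ∀ a b : List ℕ, beqL a b = true → a = b
  | [], [], _ => rfl
  | a :: as, b :: bs, h => by
    simp only [beqL, Bool.and_eq_true] at h
    rw [Nat.eq_of_beq_eq_true h.1, beqL_eq as bs h.2]
  | [], b :: bs, h => by simp [beqL] at h
  | a :: as, [], h => by simp [beqL] at h

section
variable {k : Type} [Field k]

theorem ev_addL (r : k) : ∀ a b : List ℕ, ev (addL a b) r = ev a r + ev b r
  | [], b => by simp [addL, ev]
  | a :: as, [] => by simp [addL, ev]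
  | a :: as, b :: bs => by
    simp only [addL, ev, ev_addL r as bs]; push_cast; ring

theorem ev_scaleL (r : k) (c : ℕ) : ∀ a : List ℕ, ev (scaleL c a) r = c * ev a r
  | [] => by simp [scaleL, ev]
  | a :: as => by simp only [scaleL, ev, ev_scaleL r c as]; push_cast; ring

theorem ev_mulL (r : k) : ∀ a b : List ℕ, ev (mulL a b) r = ev a r * ev b r
  | [], b => by simp [mulL, ev]
  | a :: as, b => by
    simp only [mulL, ev, ev_addL, ev_scaleL, ev_mulL r as b]; push_cast; ring

theorem cast_mod (p : ℕ) [CharP k p] (a : ℕ) : ((a % p : ℕ) : k) = a := by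
  conv_rhs => rw [← Nat.mod_add_div a p]
  simp

theorem ev_isZ (p : ℕ) [CharP k p] (r : k) : ∀ a : List ℕ, isZ p a = true → ev a r = 0
  | [], _ => rfl
  | a :: as, h => by
    simp only [isZ, Bool.and_eq_true] at h
    have h1 := cast_mod (k := k) p a
    rw [Nat.eq_of_beq_eq_true h.1] at h1
    rw [ev, ev_isZ p r as h.2, ← h1]; simp

theorem length_step (p last c : ℕ) : ∀ (prev : ℕ) (l g b : List ℕ), g.length = l.length →
    b.length = l.length → (step p last c prev l g b).length = l.length
  | _, [], _, _, _, _ => by simp [step]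
  | _, l0 :: ls, g :: gs, b :: bs, h1, h2 => by
    simp only [step, List.length_cons, Nat.add_right_cancel_iff] at *
    exact length_step p last c l0 ls gs bs h1 h2

theorem ev_step (p last c : ℕ) [CharP k p] (r : k) : ∀ (prev : ℕ) (l g b : List ℕ),
    g.length = l.length → b.length = l.length →
    ev (step p last c prev l g b) r + lastD prev l * r ^ l.length
      = prev + r * ev l r + last * ev g r + c * ev b r
  | _, [], [], [], _, _ => by simp [step, ev, lastD]
  | prev, l0 :: ls, g :: gs, b :: bs, h1, h2 => by
    simp only [List.length_cons, Nat.add_right_cancel_iff] at h1 h2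
    have ih := ev_step p last c r l0 ls gs bs h1 h2
    simp only [step, ev, lastD, List.length_cons, cast_mod]
    push_cast
    linear_combination r * ih

theorem ev_step' (p c : ℕ) [CharP k p] (r : k) (l g b : List ℕ)
    (h1 : g.length = l.length) (h2 : b.length = l.length) (hg : ev g r = r ^ g.length) :
    ev (step p (lastD 0 l) c 0 l g b) r = r * ev l r + c * ev b r := by
  have h := ev_step p (lastD 0 l) c r 0 l g b h1 h2
  rw [hg, h1] at h
  push_cast at h
  linear_combination h

theorem length_zeros : ∀ g : List ℕ, (zeros g).length = g.length
  | [] => rfl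
  | _ :: as => by simp [zeros, length_zeros as]

theorem ev_zeros (r : k) : ∀ g : List ℕ, ev (zeros g) r = 0
  | [] => rfl
  | _ :: as => by simp [zeros, ev, ev_zeros r as]

theorem mulM_spec (p : ℕ) [CharP k p] (r : k) (g b : List ℕ) (h2 : b.length = g.length)
    (hg : ev g r = r ^ g.length) : ∀ a : List ℕ,
    (mulM p g b (zeros g) a).length = g.length ∧
      ev (mulM p g b (zeros g) a) r = ev a r * ev b r
  | [] => by simp [mulM, length_zeros, ev_zeros, ev]
  | a :: as => by
    obtain ⟨i1, i2⟩ := mulM_spec p r g b h2 hg as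
    simp only [mulM]
    refine ⟨?_, ?_⟩
    · rw [length_step _ _ _ _ _ _ _ i1.symm (h2.trans i1.symm), i1]
    · rw [ev_step' p a r _ g b i1.symm (h2.trans i1.symm) hg, i2, ev]
      ring

theorem pwM_spec (p : ℕ) [CharP k p] (r : k) (g : List ℕ)
    (hg : ev g r = r ^ g.length) : ∀ (bs acc : List ℕ) (e : ℕ), acc.length = g.length →
    ev acc r = r ^ e → ev (pwM p g bs acc) r = r ^ expo bs e
  | [], acc, e, _, h => by simpa [pwM, expo] using h
  | 0 :: bs, acc, e, hl, h => by
    obtain ⟨i1, i2⟩ := mulM_spec p r g acc hl hg acc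
    simp only [pwM, expo]
    apply pwM_spec p r g hg bs _ _ i1
    rw [i2, h]; ring
  | (n + 1) :: bs, acc, e, hl, h => by
    obtain ⟨i1, i2⟩ := mulM_spec p r g acc hl hg acc
    simp only [pwM, expo]
    apply pwM_spec p r g hg bs
    · rw [length_step _ _ _ _ _ _ _ i1.symm rfl, i1]
    · rw [ev_step' p 0 r _ g _ i1.symm rfl hg, i2, h]
      push_cast; ring

theorem cast_pred (p : ℕ) [CharP k p] (hp : 1 ≤ p) : ((p - 1 : ℕ) : k) = -1 := by
  rw [Nat.cast_sub hp, CharP.cast_eq_zero]; simp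

def mono : List ℕ → List ℕ
  | [] => [1]
  | _ :: as => 0 :: mono as

theorem ev_mono (r : k) : ∀ g : List ℕ, ev (mono g) r = r ^ g.length
  | [] => by simp [mono, ev]
  | _ :: as => by simp [mono, ev, ev_mono r as, pow_succ']

def xL : List ℕ → List ℕ
  | _ :: _ :: as => 0 :: 1 :: zeros as
  | _ => []

/-- Checks that `X ^ N` reduces to `res` modulo the monic polynomial `f = X ^ n - g` over `𝔽_p`. -/
def chk (p : ℕ) (f g bs : List ℕ) (N : ℕ) (res : List ℕ) : Bool :=
  Nat.ble 1 p && Nat.ble 2 g.length &&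
    isZ p (addL f (addL g (scaleL (p - 1) (mono g)))) &&
    (expo bs 1).beq N && beqL (pwM p g bs (xL g)) res

/-- Modular powering, in the form in which it is used. -/
theorem pow_eq_ev (p : ℕ) [CharP k p] (r : k) (f g bs res : List ℕ) (N : ℕ)
    (h : chk p f g bs N res = true) (hf : ev f r = 0) : r ^ N = ev res r := by
  simp only [chk, Bool.and_eq_true, Nat.ble_eq] at h
  obtain ⟨⟨⟨⟨hp, h2⟩, hz⟩, hN⟩, hres⟩ := h
  have hz' := ev_isZ p r _ hz
  rw [ev_addL, ev_addL, ev_scaleL, cast_pred p hp, ev_mono, hf] at hz'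
  have hg : ev g r = r ^ g.length := by linear_combination hz'
  rw [← beqL_eq _ _ hres, ← Nat.eq_of_beq_eq_true hN]
  symm
  apply pwM_spec p r g hg
  · match g, h2 with
    | _ :: _ :: as, _ => simp [xL, length_zeros]
  · match g, h2 with
    | _ :: _ :: as, _ => simp [xL, ev, ev_zeros]

/-- Linear combination certificate. -/
theorem bezout_ev (p : ℕ) [CharP k p] (r : k) (u a v b c : List ℕ)
    (h : isZ p (addL (addL (mulL u a) (mulL v b)) c) = true) :
    ev u r * ev a r + ev v r * ev b r + ev c r = 0 := by
  rw [← ev_mulL, ← ev_mulL, ← ev_addL, ← ev_addL]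
  exact ev_isZ p r _ h

noncomputable def tp (k : Type) [Field k] : List ℕ → k[X]
  | [] => 0
  | c :: l => C (c : k) + X * tp k l

theorem eval_tp (r : k) : ∀ l : List ℕ, (tp k l).eval r = ev l r
  | [] => by simp [tp, ev]
  | c :: l => by simp [tp, ev, eval_tp r l]

theorem natDegree_tp : ∀ l : List ℕ, (tp k l).natDegree ≤ l.length
  | [] => by simp [tp]
  | c :: l => by
    have ih := natDegree_tp l
    rw [tp, List.length_cons]
    refine (natDegree_add_le _ _).trans (max_le (by simp) ?_)
    refine natDegree_mul_le.trans ?_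
    have := natDegree_X_le (R := k)
    omega

end
def F83 : List ℕ :=
  [22, 80, 69, 35, 67, 39, 79, 22, 7, 15, 70, 27, 46, 57, 49, 64, 72, 25, 70, 20, 18, 23, 21, 77,
   1]

def D83 : List ℕ :=
  [80, 55, 22, 19, 29, 59, 71, 56, 52, 36, 48, 54, 77, 22, 47, 73, 10, 15, 48, 28, 68, 47, 28, 24]

def N83 : List ℕ :=
  [61, 3, 14, 48, 16, 44, 4, 61, 76, 68, 13, 56, 37, 26, 34, 19, 11, 58, 13, 63, 65, 60, 62, 6]

def U83 : List ℕ :=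
  [8, 74, 13, 4, 26, 50, 70, 31, 12, 60, 68, 0, 63, 72, 11, 71, 41, 10, 15, 0, 16, 26, 73]

def V83 : List ℕ :=
  [3, 64, 45, 54, 45, 15, 26, 62, 26, 2, 47, 79, 80, 47, 1, 18, 78, 58, 5, 81, 75, 14, 4, 35]

def P83 : List ℕ :=
  [60, 65, 26, 22, 9, 35, 47, 35, 32, 69, 63, 73, 22, 59, 18, 42, 55, 71, 80, 1, 42, 32, 51, 73]

def Q83 : List ℕ :=
  [52, 8, 25, 53, 80, 20, 24, 29, 27, 5, 10, 50, 28, 37, 65, 41, 8, 19, 60, 25, 10, 32, 5]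

def R83 : List ℕ :=
  [59, 1, 47, 57, 10, 47, 58, 62, 38, 25, 4, 9, 53, 32, 82, 35, 21, 65, 74, 29, 33, 50]

def G83 : List ℕ :=
  [64, 82]

def b83 : List ℕ :=
  [0, 1, 0, 0, 1, 1]

def F101 : List ℕ :=
  [22, 22, 31, 52, 91, 49, 64, 88, 97, 12, 32, 6, 79, 97, 63, 14, 8, 93, 45, 27, 83, 41, 21, 95, 1]

def D101 : List ℕ :=
  [22, 62, 55, 61, 43, 81, 10, 69, 7, 17, 66, 39, 49, 74, 8, 27, 66, 2, 8, 44, 53, 58, 64, 24]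

def N101 : List ℕ :=
  [79, 79, 70, 49, 10, 52, 37, 13, 4, 89, 69, 95, 22, 4, 38, 87, 93, 8, 56, 74, 18, 60, 80, 6]

def U101 : List ℕ :=
  [36, 51, 69, 98, 56, 62, 51, 31, 87, 25, 21, 59, 71, 20, 74, 97, 52, 25, 85, 89, 88, 30, 25]

def V101 : List ℕ :=
  [88, 69, 30, 84, 53, 41, 2, 16, 10, 73, 56, 87, 5, 97, 53, 86, 24, 73, 68, 33, 90, 5, 19, 20]

def P101 : List ℕ :=
  [74, 94, 23, 28, 70, 55, 11, 25, 9, 8, 90, 49, 29, 48, 45, 100, 18, 0, 89, 0, 42, 1, 38, 33]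

def Q101 : List ℕ :=
  [51, 34, 43, 45, 73, 37, 9, 2, 54, 54, 63, 48, 28, 44, 88, 44, 93, 38, 4, 53, 41, 85, 60, 56]

def R101 : List ℕ :=
  [81, 16, 24, 40, 1, 90, 42, 32, 28, 89, 54, 9, 69, 60, 29, 3, 70, 0, 77, 11, 61, 55, 71]

def G101 : List ℕ :=
  [100]

def b101 : List ℕ :=
  [1, 0, 0, 1, 0, 1]

def bb83 : List ℕ :=
  [1, 0, 0, 0, 1, 0, 1, 1, 0, 0, 0, 0, 1, 1, 0, 1, 1, 1, 1, 0, 0, 0, 1, 0, 0, 1, 1, 0, 1, 0, 1, 0,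
   1, 0, 1, 1, 0, 1, 0, 1, 0, 1, 1, 1, 1, 1, 0, 0, 0, 0, 0, 1, 1, 0, 0, 0, 1, 1, 0, 0, 0, 1, 0, 1,
   1, 1, 0, 0, 1, 1, 1, 1, 1, 1, 1, 1, 0, 1, 1, 1, 0, 1, 1, 1, 0, 0, 0, 1, 0, 1, 1, 0, 0, 1, 1, 1,
   0, 1, 1, 1, 1, 1, 1, 1, 1, 0, 1, 0, 0, 0, 0, 1, 1, 1, 0, 1, 0, 0, 0, 0, 1, 0, 0, 0, 0, 1, 0, 1,
   1, 0, 1, 0, 0, 1, 1, 0, 1, 0, 1, 1, 1, 1, 1, 0, 1, 1]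

def bb101 : List ℕ :=
  [0, 0, 1, 0, 1, 1, 1, 0, 0, 1, 1, 0, 0, 1, 1, 1, 0, 0, 0, 0, 1, 0, 1, 0, 1, 1, 1, 1, 1, 0, 1, 1,
   0, 0, 1, 0, 0, 0, 1, 1, 1, 0, 1, 0, 1, 0, 1, 1, 1, 1, 0, 0, 1, 0, 0, 0, 1, 1, 1, 1, 1, 1, 1, 0,
   1, 1, 1, 1, 1, 1, 1, 0, 1]

def A2 : List ℕ :=
  [24, 67, 1]

def NA2 : List ℕ :=
  [77, 34]

def H22 : List ℕ :=
  [43, 45, 38, 92, 61, 72, 39, 98, 15, 85, 58, 41, 80, 82, 86, 18, 98, 62, 73, 22, 40, 28, 1]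

def NH22 : List ℕ :=
  [58, 56, 63, 9, 40, 29, 62, 3, 86, 16, 43, 60, 21, 19, 15, 83, 3, 39, 28, 79, 61, 73]

def S2 : List ℕ :=
  [34, 100]

def SU : List ℕ :=
  [33, 4]

def SV : List ℕ :=
  [8]

theorem chkA1 : chk 83 F83 N83 bb83 (83 ^ 23) (xL N83) = true := by decide +kernel
theorem chkA2 : chk 83 F83 N83 b83 83 P83 = true := by decide +kernel
theorem chkA3 : isZ 83 (addL (addL (mulL U83 F83) (mulL V83 D83)) [82]) = true := by decide +kernel
theorem chkA4 : isZ 83 (addL (addL (mulL Q83 (addL P83 [0, 82])) (mulL R83 F83)) G83) = true := by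
  decide +kernel
theorem chkB1 : chk 101 H22 NH22 bb101 (101 ^ 11) (xL NH22) = true := by decide +kernel
theorem chkB2 : chk 101 F101 N101 b101 101 P101 = true := by decide +kernel
theorem chkB3 : isZ 101 (addL (addL (mulL U101 F101) (mulL V101 D101)) [100]) = true := by
  decide +kernel
theorem chkB4 :
    isZ 101 (addL (addL (mulL Q101 (addL P101 [0, 100])) (mulL R101 F101)) G101) = true := by
  decide +kernel
theorem chkB5 : chk 101 A2 NA2 bb101 (101 ^ 11) S2 = true := by decide +kernel
theorem chkB6 : isZ 101 (addL (addL (mulL SU (addL S2 [0, 100])) (mulL SV A2)) [100]) = true := by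
  decide +kernel
theorem chkB7 : isZ 101 (addL (addL (mulL A2 H22) (mulL [100] F101)) []) = true := by
  decide +kernel
noncomputable def fZ : ℤ[X] :=
  X ^ 24 - 6 * X ^ 23 + 21 * X ^ 22 - 60 * X ^ 21 + 184 * X ^ 20 - 478 * X ^ 19 + 651 * X ^ 18 -
    1220 * X ^ 17 + 2230 * X ^ 16 + 1226 * X ^ 15 - 947 * X ^ 14 + 804 * X ^ 13 - 7092 * X ^ 12 -
    6862 * X ^ 11 + 3971 * X ^ 10 - 15340 * X ^ 9 + 7975 * X ^ 8 + 36044 * X ^ 7 + 7134 * X ^ 6 +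
    14896 * X ^ 5 + 13928 * X ^ 4 - 2372 * X ^ 3 + 3970 * X ^ 2 - 584 * X + 22

theorem aeval_fZ {k : Type} [Field k] (r : k) : aeval r fZ =
    r ^ 24 - 6 * r ^ 23 + 21 * r ^ 22 - 60 * r ^ 21 + 184 * r ^ 20 - 478 * r ^ 19 + 651 * r ^ 18 -
      1220 * r ^ 17 + 2230 * r ^ 16 + 1226 * r ^ 15 - 947 * r ^ 14 + 804 * r ^ 13 - 7092 * r ^ 12
      - 6862 * r ^ 11 + 3971 * r ^ 10 - 15340 * r ^ 9 + 7975 * r ^ 8 + 36044 * r ^ 7 + 7134 * r ^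
      6 + 14896 * r ^ 5 + 13928 * r ^ 4 - 2372 * r ^ 3 + 3970 * r ^ 2 - 584 * r + 22 := by
  simp [fZ, aeval_def, eval₂_mul, eval₂_pow]

theorem aeval_dfZ {k : Type} [Field k] (r : k) : aeval r (derivative fZ) =
    24 * r ^ 23 - 138 * r ^ 22 + 462 * r ^ 21 - 1260 * r ^ 20 + 3680 * r ^ 19 - 9082 * r ^ 18 +
      11718 * r ^ 17 - 20740 * r ^ 16 + 35680 * r ^ 15 + 18390 * r ^ 14 - 13258 * r ^ 13 + 10452 *
      r ^ 12 - 85104 * r ^ 11 - 75482 * r ^ 10 + 39710 * r ^ 9 - 138060 * r ^ 8 + 63800 * r ^ 7 +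
      252308 * r ^ 6 + 42804 * r ^ 5 + 74480 * r ^ 4 + 55712 * r ^ 3 - 7116 * r ^ 2 + 7940 * r -
      584 := by
  simp only [fZ, derivative_add, derivative_sub, derivative_mul, derivative_X_pow, derivative_X,
    derivative_ofNat]
  simp [aeval_def, eval₂_mul, eval₂_pow]
  ring

theorem ev_F83 {k : Type} [Field k] [CharP k 83] (r : k) :
    ev F83 r = aeval r fZ := by
  have h : (83 : k) = 0 := by exact_mod_cast CharP.cast_eq_zero k 83
  rw [aeval_fZ]
  simp [F83, ev]
  linear_combination (8 * r ^ 1 + (-47) * r ^ 2 + 29 * r ^ 3 + (-167) * r ^ 4 + (-179) * r ^ 5 +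
    (-85) * r ^ 6 + (-434) * r ^ 7 + (-96) * r ^ 8 + 185 * r ^ 9 + (-47) * r ^ 10 + 83 * r ^ 11 +
    86 * r ^ 12 + (-9) * r ^ 13 + 12 * r ^ 14 + (-14) * r ^ 15 + (-26) * r ^ 16 + 15 * r ^ 17 +
    (-7) * r ^ 18 + 6 * r ^ 19 + (-2) * r ^ 20 + 1 * r ^ 21 + 1 * r ^ 23) * h

theorem ev_D83 {k : Type} [Field k] [CharP k 83] (r : k) :
    ev D83 r = aeval r (derivative fZ) := by
  have h : (83 : k) = 0 := by exact_mod_cast CharP.cast_eq_zero k 83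
  rw [aeval_dfZ]
  simp [D83, ev]
  linear_combination (8 * r ^ 0 + (-95) * r ^ 1 + 86 * r ^ 2 + (-671) * r ^ 3 + (-897) * r ^ 4 +
    (-515) * r ^ 5 + (-3039) * r ^ 6 + (-768) * r ^ 7 + 1664 * r ^ 8 + (-478) * r ^ 9 + 910 * r ^
    10 + 1026 * r ^ 11 + (-125) * r ^ 12 + 160 * r ^ 13 + (-221) * r ^ 14 + (-429) * r ^ 15 + 250
    * r ^ 16 + (-141) * r ^ 17 + 110 * r ^ 18 + (-44) * r ^ 19 + 16 * r ^ 20 + (-5) * r ^ 21 + 2 *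
    r ^ 22) * h

theorem ev_F101 {k : Type} [Field k] [CharP k 101] (r : k) :
    ev F101 r = aeval r fZ := by
  have h : (101 : k) = 0 := by exact_mod_cast CharP.cast_eq_zero k 101
  rw [aeval_fZ]
  simp [F101, ev]
  linear_combination (6 * r ^ 1 + (-39) * r ^ 2 + 24 * r ^ 3 + (-137) * r ^ 4 + (-147) * r ^ 5 +
    (-70) * r ^ 6 + (-356) * r ^ 7 + (-78) * r ^ 8 + 152 * r ^ 9 + (-39) * r ^ 10 + 68 * r ^ 11 +
    71 * r ^ 12 + (-7) * r ^ 13 + 10 * r ^ 14 + (-12) * r ^ 15 + (-22) * r ^ 16 + 13 * r ^ 17 +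
    (-6) * r ^ 18 + 5 * r ^ 19 + (-1) * r ^ 20 + 1 * r ^ 21 + 1 * r ^ 23) * h

theorem ev_D101 {k : Type} [Field k] [CharP k 101] (r : k) :
    ev D101 r = aeval r (derivative fZ) := by
  have h : (101 : k) = 0 := by exact_mod_cast CharP.cast_eq_zero k 101
  rw [aeval_dfZ]
  simp [D101, ev]
  linear_combination (6 * r ^ 0 + (-78) * r ^ 1 + 71 * r ^ 2 + (-551) * r ^ 3 + (-737) * r ^ 4 +
    (-423) * r ^ 5 + (-2498) * r ^ 6 + (-631) * r ^ 7 + 1367 * r ^ 8 + (-393) * r ^ 9 + 748 * r ^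
    10 + 843 * r ^ 11 + (-103) * r ^ 12 + 132 * r ^ 13 + (-182) * r ^ 14 + (-353) * r ^ 15 + 206 *
    r ^ 16 + (-116) * r ^ 17 + 90 * r ^ 18 + (-36) * r ^ 19 + 13 * r ^ 20 + (-4) * r ^ 21 + 2 * r
    ^ 22) * h

section
variable {k : Type} [Field k]

theorem sep83 [CharP k 83] (r : k) (h : aeval r fZ = 0) : aeval r (derivative fZ) ≠ 0 := by
  intro h2
  have hb := bezout_ev 83 r _ _ _ _ _ chkA3
  have h83 : (83 : k) = 0 := by exact_mod_cast CharP.cast_eq_zero k 83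
  rw [ev_F83, ev_D83, h, h2] at hb
  simp only [ev, Nat.cast_ofNat] at hb
  apply one_ne_zero (α := k)
  linear_combination h83 - hb

theorem sep101 [CharP k 101] (r : k) (h : aeval r fZ = 0) : aeval r (derivative fZ) ≠ 0 := by
  intro h2
  have hb := bezout_ev 101 r _ _ _ _ _ chkB3
  have h101 : (101 : k) = 0 := by exact_mod_cast CharP.cast_eq_zero k 101
  rw [ev_F101, ev_D101, h, h2] at hb
  simp only [ev, Nat.cast_ofNat] at hb
  apply one_ne_zero (α := k)
  linear_combination h101 - hb

theorem ev_xL (r : k) (g : List ℕ) (h : 2 ≤ g.length) : ev (xL g) r = r := by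
  match g, h with
  | _ :: _ :: as, _ => simp [xL, ev, ev_zeros]

theorem pow83 [CharP k 83] (r : k) (h : aeval r fZ = 0) : r ^ (83 ^ 23) = r := by
  rw [← ev_F83] at h
  exact (pow_eq_ev 83 r _ _ _ _ _ chkA1 h).trans (ev_xL r _ (by decide))

theorem fix83 [CharP k 83] (r : k) (h : aeval r fZ = 0) (h2 : r ^ 83 = r) : r = 64 := by
  rw [← ev_F83] at h
  have hp := pow_eq_ev 83 r _ _ _ _ _ chkA2 h
  have hb := bezout_ev 83 r _ _ _ _ _ chkA4
  have h83 : (83 : k) = 0 := by exact_mod_cast CharP.cast_eq_zero k 83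
  rw [h, ev_addL, ← hp, h2] at hb
  simp only [ev, G83, Nat.cast_ofNat, Nat.cast_zero] at hb
  linear_combination (ev Q83 r * r + r) * h83 - hb

theorem fix101 [CharP k 101] (r : k) (h : aeval r fZ = 0) : r ^ 101 ≠ r := by
  intro h2
  rw [← ev_F101] at h
  have hp := pow_eq_ev 101 r _ _ _ _ _ chkB2 h
  have hb := bezout_ev 101 r _ _ _ _ _ chkB4
  have h101 : (101 : k) = 0 := by exact_mod_cast CharP.cast_eq_zero k 101
  rw [h, ev_addL, ← hp, h2] at hb
  simp only [ev, G101, Nat.cast_ofNat, Nat.cast_zero] at hb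
  apply one_ne_zero (α := k)
  linear_combination (ev Q101 r * r + 1) * h101 - hb

theorem split101 [CharP k 101] (r : k) (h : aeval r fZ = 0) : ev A2 r = 0 ∨ ev H22 r = 0 := by
  rw [← ev_F101] at h
  have hb := bezout_ev 101 r _ _ _ _ _ chkB7
  rw [h] at hb
  simpa [ev] using hb

theorem powH22 [CharP k 101] (r : k) (h : ev H22 r = 0) : r ^ (101 ^ 11) = r :=
  (pow_eq_ev 101 r _ _ _ _ _ chkB1 h).trans (ev_xL r _ (by decide))

theorem powA2 [CharP k 101] (r : k) (h : ev A2 r = 0) : r ^ (101 ^ 11) ≠ r := by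
  intro h2
  have hp := pow_eq_ev 101 r _ _ _ _ _ chkB5 h
  have hb := bezout_ev 101 r _ _ _ _ _ chkB6
  have h101 : (101 : k) = 0 := by exact_mod_cast CharP.cast_eq_zero k 101
  rw [h, ev_addL, ← hp, h2] at hb
  simp only [ev, Nat.cast_ofNat, Nat.cast_zero] at hb
  apply one_ne_zero (α := k)
  linear_combination (ev SU r * r + 1) * h101 - hb

theorem A2_three (x y z : k) (hx : ev A2 x = 0) (hy : ev A2 y = 0) (hz : ev A2 z = 0)
    (hxy : x ≠ y) (hxz : x ≠ z) : y = z := by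
  simp only [A2, ev, Nat.cast_ofNat, Nat.cast_one] at hx hy hz
  have h1 : x + y + 67 = 0 := by
    apply mul_left_cancel₀ (sub_ne_zero.mpr hxy)
    linear_combination hx - hy
  have h2 : x + z + 67 = 0 := by
    apply mul_left_cancel₀ (sub_ne_zero.mpr hxz)
    linear_combination hx - hz
  linear_combination h1 - h2

theorem H22_not_all [CharP k 101] {ι : Type*} [Fintype ι] (hι : Fintype.card ι = 24) (ρ : ι → k)
    (hρ : Function.Injective ρ) : ∃ a, ev H22 (ρ a) ≠ 0 := by
  by_contra! h
  have h0 : tp k H22 = 0 := by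
    apply eq_zero_of_natDegree_lt_card_of_eval_eq_zero (tp k H22) hρ
    · intro i; rw [eval_tp, h]
    · have h1 := natDegree_tp (k := k) H22
      have h2 : H22.length = 23 := by decide
      omega
  have h1 := eval_tp (0 : k) H22
  rw [h0] at h1
  have h2 : ev H22 (0 : k) = ((H22.headD 0 : ℕ) : k) := by simp [H22, ev]
  rw [h2, eval_zero] at h1
  have h3 := (CharP.cast_eq_zero_iff k 101 _).mp h1.symm
  revert h3
  decide

end

theorem monic_fZ : fZ.Monic := by
  unfold fZ
  monicity!

theorem natDegree_fZ : fZ.natDegree = 24 := by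
  unfold fZ
  compute_degree!

theorem gal_of_field (E : Type) [Field E] [NumberField E] [IsGalois ℚ E] (g : ℚ[X])
    (hg : g = fZ.map (algebraMap ℤ ℚ)) [hs : Fact (g.map (algebraMap ℚ E)).Splits] :
    Nonempty (g.Gal ≃* Equiv.Perm (Fin 24)) := by
  classical
  obtain ⟨hsepE, φ, k, _, _, ρ, hρi, hρr, hρf⟩ :=
    exists_frob fZ monic_fZ 83 (by norm_num) (fun k _ _ r h => sep83 r h) E
  obtain ⟨-, φ', k', _, _, ρ', hρi', hρr', hρf'⟩ :=
    exists_frob fZ monic_fZ 101 (by norm_num) (fun k _ _ r h => sep101 r h) E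
  have hgm : g.Monic := hg ▸ monic_fZ.map _
  have hg0 : g ≠ 0 := hgm.ne_zero
  have hdeg : g.natDegree = 24 := by
    rw [hg, monic_fZ.natDegree_map, natDegree_fZ]
  have hmem : ∀ a : g.rootSet E, aeval (a : E) fZ = 0 := by
    intro a
    obtain ⟨a, ha⟩ := a
    have h := (mem_rootSet.mp ha).2
    rwa [hg, aeval_map_algebraMap] at h
  have hcard : Fintype.card (g.rootSet E) = 24 := by
    rw [← hdeg, card_rootSet_eq_natDegree_iff_of_splits hg0 hs.out]
    have : (g.map (algebraMap ℚ E)).Separable := by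
      rw [← nodup_roots_iff_of_splits (hgm.map _).ne_zero hs.out]
      rw [Multiset.nodup_iff_count_le_one]
      intro a
      rw [count_roots]
      by_contra! h
      obtain ⟨h1, h2⟩ := (one_lt_rootMultiplicity_iff_isRoot (hgm.map _).ne_zero).mp h
      rw [IsRoot, hg, map_map, ← IsScalarTower.algebraMap_eq, eval_map_algebraMap] at h1
      rw [IsRoot, hg, map_map, ← IsScalarTower.algebraMap_eq, derivative_map,
        eval_map_algebraMap] at h2
      exact hsepE a h1 h2
    exact separable_map _ |>.mp this
  let π := Gal.galActionHom g E
  let c := π (Gal.restrict g E φ)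
  let t := π (Gal.restrict g E φ')
  have hc : ∀ a, ((c a : g.rootSet E) : E) = φ a := fun a => Gal.galActionHom_restrict g E φ a
  have ht : ∀ a, ((t a : g.rootSet E) : E) = φ' a := fun a => Gal.galActionHom_restrict g E φ' a
  let τ : g.rootSet E → k := fun a => ρ ⟨a, hmem a⟩
  let τ' : g.rootSet E → k' := fun a => ρ' ⟨a, hmem a⟩
  have hτi : Function.Injective τ := fun a b h => Subtype.ext (Subtype.mk.inj (hρi h))
  have hτi' : Function.Injective τ' := fun a b h => Subtype.ext (Subtype.mk.inj (hρi' h))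
  have hτr : ∀ a, aeval (τ a) fZ = 0 := fun a => hρr _
  have hτr' : ∀ a, aeval (τ' a) fZ = 0 := fun a => hρr' _
  have hτc : ∀ a, τ (c a) = τ a ^ 83 := fun a => hρf ⟨a, hmem a⟩ ⟨c a, hmem (c a)⟩ (hc a)
  have hτt : ∀ a, τ' (t a) = τ' a ^ 101 := fun a => hρf' ⟨a, hmem a⟩ ⟨t a, hmem (t a)⟩ (ht a)
  have hτcn : ∀ (n : ℕ) a, τ ((c ^ n) a) = τ a ^ (83 ^ n) := by
    intro n
    induction n with
    | zero => intro a; simp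
    | succ n ih => intro a; rw [pow_succ, Equiv.Perm.mul_apply, ih, hτc, ← pow_mul, pow_succ']
  have hτtn : ∀ (n : ℕ) a, τ' ((t ^ n) a) = τ' a ^ (101 ^ n) := by
    intro n
    induction n with
    | zero => intro a; simp
    | succ n ih => intro a; rw [pow_succ, Equiv.Perm.mul_apply, ih, hτt, ← pow_mul, pow_succ']
  have htop : π.range = ⊤ := by
    apply grp24 hcard π.range c t (t ^ 11) ⟨_, rfl⟩ ⟨_, rfl⟩
    · exact π.range.pow_mem ⟨_, rfl⟩ 11
    · ext1 a
      apply hτi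
      rw [hτcn, pow83 _ (hτr a), Equiv.Perm.one_apply]
    · intro a b ha hb
      apply hτi
      have h1 := hτc a
      have h2 := hτc b
      rw [ha] at h1
      rw [hb] at h2
      rw [fix83 _ (hτr a) h1.symm, fix83 _ (hτr b) h2.symm]
    · intro a ha
      have h1 := hτt a
      rw [ha] at h1
      exact fix101 _ (hτr' a) h1.symm
    · rw [← Equiv.Perm.card_support_eq_two]
      have hA : ∀ a, (t ^ 11) a ≠ a → ev A2 (τ' a) = 0 := by
        intro a ha
        refine (split101 _ (hτr' a)).resolve_right fun h => ha (hτi' ?_)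
        rw [hτtn, powH22 _ h]
      have hne : t ^ 11 ≠ 1 := by
        intro h
        obtain ⟨a, ha⟩ := H22_not_all hcard τ' hτi'
        apply powA2 _ ((split101 _ (hτr' a)).resolve_right ha)
        rw [← hτtn, h, Equiv.Perm.one_apply]
      have h2 : 1 < (t ^ 11).support.card := Equiv.Perm.one_lt_card_support_of_ne_one hne
      have h3 : ¬ 2 < (t ^ 11).support.card := by
        intro h
        obtain ⟨x, y, z, hx, hy, hz, hxy, hxz, hyz⟩ := Finset.two_lt_card_iff.mp h
        rw [Equiv.Perm.mem_support] at hx hy hz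
        exact hyz (hτi' (A2_three _ _ _ (hA x hx) (hA y hy) (hA z hz)
          (hτi'.ne hxy) (hτi'.ne hxz)))
      omega
  have hbij : Function.Bijective π :=
    ⟨Gal.galActionHom_injective g E, MonoidHom.range_eq_top.mp htop⟩
  exact ⟨(MulEquiv.ofBijective π hbij).trans
    (Equiv.permCongrHom (Fintype.equivFinOfCardEq hcard))⟩

theorem fQ_eq : ((X : ℚ[X]) ^ 24 - 6 * X ^ 23 + 21 * X ^ 22 - 60 * X ^ 21 + 184 * X ^ 20
          - 478 * X ^ 19 + 651 * X ^ 18 - 1220 * X ^ 17 + 2230 * X ^ 16 + 1226 * X ^ 15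
          - 947 * X ^ 14 + 804 * X ^ 13 - 7092 * X ^ 12 - 6862 * X ^ 11 + 3971 * X ^ 10
          - 15340 * X ^ 9 + 7975 * X ^ 8 + 36044 * X ^ 7 + 7134 * X ^ 6 + 14896 * X ^ 5
          + 13928 * X ^ 4 - 2372 * X ^ 3 + 3970 * X ^ 2 - 584 * X + 22) =
    fZ.map (algebraMap ℤ ℚ) := by
  simp [fZ, Polynomial.map_ofNat]

theorem gal_of_poly (g : ℚ[X]) (hg : g = fZ.map (algebraMap ℤ ℚ)) :
    Nonempty (g.Gal ≃* Equiv.Perm (Fin 24)) := by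
  have h1 : NumberField g.SplittingField :=
    { to_charZero := inferInstance, to_finiteDimensional := inferInstance }
  have h0 : IsSplittingField ℚ g.SplittingField g := by
    convert! IsSplittingField.splittingField g
  have hn : Normal ℚ g.SplittingField := Normal.of_isSplittingField g
  have h2 : IsGalois ℚ g.SplittingField := ⟨⟩
  have h3 : Fact (g.map (algebraMap ℚ g.SplittingField)).Splits := ⟨h0.splits⟩
  exact gal_of_field g.SplittingField g hg

/-- The Galois group over `ℚ` (i.e. the automorphism group of the splitting
field) of the degree-24 polynomial defining the number field `K` of the passport
`16_0_3_2_1_11_a` is isomorphic to the full symmetric group `S₂₄`. -/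
theorem degree_24_field_polynomial_galois_group :
    Nonempty
      (Polynomial.Gal
        ((X : ℚ[X]) ^ 24 - 6 * X ^ 23 + 21 * X ^ 22 - 60 * X ^ 21 + 184 * X ^ 20
          - 478 * X ^ 19 + 651 * X ^ 18 - 1220 * X ^ 17 + 2230 * X ^ 16 + 1226 * X ^ 15
          - 947 * X ^ 14 + 804 * X ^ 13 - 7092 * X ^ 12 - 6862 * X ^ 11 + 3971 * X ^ 10
          - 15340 * X ^ 9 + 7975 * X ^ 8 + 36044 * X ^ 7 + 7134 * X ^ 6 + 14896 * X ^ 5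
          + 13928 * X ^ 4 - 2372 * X ^ 3 + 3970 * X ^ 2 - 584 * X + 22) ≃*
        Equiv.Perm (Fin 24)) := by
  exact gal_of_poly _ fQ_eq
end
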